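/- arXiv:math/9910160 — 5 statements merged into one kernel-verified Lean document; each statement's English description precedes it below -/
import Mathlib

section
/- Let n ≥ 1 and let K be a nonempty closed bounded convex subset of ℝⁿ. Then for every continuous function f : K → ℝ with ω₂(f;K) ≤ 1 there exists an affine function φ(x) = c + ⟨a,x⟩ on ℝⁿ such that |f(x) − φ(x)| ≤ (1/2)⌊log₂ n⌋ + 5/4 for all x ∈ K. (Upper bound of Theorem 3.1: w₂(n) ≤ (1/2)⌊log₂ n⌋ + 5/4.) -/
open Finset

/-- `diffBound m K f c` says that the `m`-th modulus of smoothness of `f` on `K` is at most `c`,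
i.e. `|Δ_h^m f(x)| ≤ c` whenever `x, x+h, …, x+mh ∈ K`. -/
def diffBound {E : Type*} [AddCommGroup E] [Module ℝ E] (m : ℕ) (K : Set E) (f : E → ℝ)
    (c : ℝ) : Prop :=
  ∀ x h : E, (∀ j : ℕ, j ≤ m → x + (j : ℝ) • h ∈ K) →
    |∑ j ∈ Finset.range (m + 1), (-1 : ℝ) ^ (m - j) * (m.choose j : ℝ) * f (x + (j : ℝ) • h)| ≤ c

/-!
The affine functions `φ` with `|f - φ| ≤ C` on a finite set form an intersection of half-spaces in a
space of dimension `n + 1`, so by Helly's theorem it suffices to satisfy any `n + 2` of the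
constraints `φ x < f x + C` and `f y - C < φ y`. By Carver's theorem of the alternative, if such a
subsystem is infeasible then a convex combination of the points `x` and one of the points `y` have
the same barycenter, while the corresponding averages of `f` differ by at least `2 * C`.

On the other hand, both averages are close to the value of `f` at the barycenter: `f` and `-f` are
midpoint convex up to `1 / 2`, and splitting a convex combination of `k + 1` points repeatedly at a
median of its weights gives Jensen's inequality with error `1 + log₂ k / 2`. As the two combinations
involve at most `n + 2` points, the AM-GM inequality for the arguments of the two logarithms rules
out infeasibility for `C = ⌊log₂ n⌋ / 2 + 1`. Compactness passes from finite sets to `K`.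
-/

/-- Midpoint convexity up to an additive error `1 / 2`; both `f` and `-f` have this property on a
convex set where the second modulus of smoothness of `f` is at most `1`. -/
def ApproxMidpointConvexOn {E : Type*} [AddCommGroup E] [Module ℝ E] (K : Set E) (f : E → ℝ) :
    Prop :=
  ∀ x ∈ K, ∀ y ∈ K, f (midpoint ℝ x y) ≤ (f x + f y) / 2 + 1 / 2

section SecondDifference

variable {E : Type*} [AddCommGroup E] [Module ℝ E] {K : Set E} {f : E → ℝ}

lemma diffBound.abs_sub_midpoint_le (hω : diffBound 2 K f 1) (hK : Convex ℝ K) {x y : E}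
    (hx : x ∈ K) (hy : y ∈ K) : |f x - 2 * f (midpoint ℝ x y) + f y| ≤ 1 := by
  have hmid : x + (2⁻¹ : ℝ) • (y - x) = midpoint ℝ x y := by
    rw [midpoint_eq_smul_add, invOf_eq_inv]
    module
  have hend : x + (2 : ℝ) • (2⁻¹ : ℝ) • (y - x) = y := by
    module
  have hmem (j : ℕ) (hj : j ≤ 2) : x + (j : ℝ) • (2⁻¹ : ℝ) • (y - x) ∈ K := by
    interval_cases j
    · simpa using hx
    · simpa [hmid] using hK.midpoint_mem hx hy
    · simpa [hend] using hy
  simpa [sum_range_succ, hmid, hend, ← sub_eq_add_neg] using hω x ((2⁻¹ : ℝ) • (y - x)) hmem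

lemma diffBound.approxMidpointConvexOn (hω : diffBound 2 K f 1) (hK : Convex ℝ K) :
    ApproxMidpointConvexOn K f := fun x hx y hy ↦ by
  linarith [(abs_le.1 (hω.abs_sub_midpoint_le hK hx hy)).1]

lemma diffBound.approxMidpointConvexOn_neg (hω : diffBound 2 K f 1) (hK : Convex ℝ K) :
    ApproxMidpointConvexOn K (-f) := fun x hx y hy ↦ by
  simp only [Pi.neg_apply]
  linarith [(abs_le.1 (hω.abs_sub_midpoint_le hK hx hy)).2]

end SecondDifference

/-- The error in Jensen's inequality for a convex combination of `k + 1` points, for functions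
that are midpoint convex up to `1 / 2`. -/
noncomputable def jensenError (k : ℕ) : ℝ := if k = 0 then 0 else 1 + Real.logb 2 k / 2

section JensenError

variable {k a b n : ℕ}

lemma jensenError_zero : jensenError 0 = 0 := if_pos rfl

lemma one_le_jensenError (hk : k ≠ 0) : 1 ≤ jensenError k := by
  have : 0 ≤ Real.logb 2 k :=
    Real.logb_nonneg one_lt_two (Nat.one_le_cast.2 (Nat.one_le_iff_ne_zero.2 hk))
  rw [jensenError, if_neg hk]
  linarith

lemma jensenError_mono : Monotone jensenError := by
  intro k l hkl
  rcases eq_or_ne k 0 with rfl | hk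
  · rcases eq_or_ne l 0 with rfl | hl
    · rfl
    · exact (jensenError_zero.trans_le zero_le_one).trans (one_le_jensenError hl)
  · rw [jensenError, jensenError, if_neg hk, if_neg (by lia)]
    gcongr
    exact one_lt_two

lemma jensenError_add_jensenError_le (ha : a ≠ 0) (hb : b ≠ 0) :
    jensenError a + jensenError b ≤ 2 * jensenError (a + b) - 1 := by
  have ha' : (0 : ℝ) < a := by exact_mod_cast Nat.pos_of_ne_zero ha
  have hb' : (0 : ℝ) < b := by exact_mod_cast Nat.pos_of_ne_zero hb
  have amgm : Real.logb 2 (2 ^ 2 * (a * b : ℝ)) ≤ Real.logb 2 ((a + b : ℝ) ^ 2) :=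
    Real.logb_le_logb_of_le one_lt_two (by positivity) (by linarith [four_mul_le_sq_add (a : ℝ) b])
  rw [Real.logb_mul (by positivity) (by positivity), Real.logb_mul ha'.ne' hb'.ne',
    Real.logb_pow, Real.logb_pow, Real.logb_self_eq_one one_lt_two] at amgm
  rw [jensenError, jensenError, jensenError, if_neg ha, if_neg hb, if_neg (by lia)]
  push_cast at amgm ⊢
  linarith

lemma jensenError_lt_log_add (n : ℕ) : jensenError n < (Nat.log 2 n : ℝ) / 2 + 3 / 2 := by
  rcases eq_or_ne n 0 with rfl | hn
  · norm_num [jensenError_zero]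
  · have hlog : Real.logb 2 n < Nat.log 2 n + 1 := by
      rw [← Real.natFloor_logb_natCast]
      exact_mod_cast Nat.lt_floor_add_one (Real.logb 2 n)
    rw [jensenError, if_neg hn]
    linarith

lemma jensenError_add_jensenError_lt (hab : a + b ≤ n) :
    jensenError a + jensenError b < Nat.log 2 n + 2 := by
  have hn := jensenError_lt_log_add n
  have hmono := jensenError_mono hab
  rcases eq_or_ne a 0 with rfl | ha
  · rw [jensenError_zero]
    rw [zero_add] at hmono
    linarith [(Nat.log 2 n).cast_nonneg (α := ℝ)]
  rcases eq_or_ne b 0 with rfl | hb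
  · rw [jensenError_zero]
    rw [add_zero] at hmono
    linarith [(Nat.log 2 n).cast_nonneg (α := ℝ)]
  linarith [jensenError_add_jensenError_le ha hb]

end JensenError

section Simplex

variable {ι : Type*} [Fintype ι] {w : ι → ℝ}

lemma nonempty_of_mem_stdSimplex (hw : w ∈ stdSimplex ℝ ι) : Nonempty ι := by
  by_contra! h
  simpa using hw.2

lemma exists_midpoint_eq_of_sum_erase_le_half [DecidableEq ι] (hw : w ∈ stdSimplex ℝ ι)
    {t : Finset ι} {i : ι} (hi : i ∈ t) (hlow : ∑ j ∈ t.erase i, w j ≤ 1 / 2)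
    (hhigh : 1 / 2 ≤ ∑ j ∈ t, w j) :
    ∃ u ∈ stdSimplex ℝ ι, ∃ v ∈ stdSimplex ℝ ι, midpoint ℝ u v = w ∧
      (∀ j ∉ t, u j = 0) ∧ ∀ j ≠ i, j ∈ t ∨ w j = 0 → v j = 0 := by
  set T := ∑ j ∈ t.erase i, w j with hT
  have hTi : w i + T = ∑ j ∈ t, w j := add_sum_erase t w hi
  let u : ι → ℝ := fun j ↦ if j = i then 1 - 2 * T else if j ∈ t then 2 * w j else 0
  have hu_i : u i = 1 - 2 * T := if_pos rfl
  have hu_mem {j : ι} (hji : j ≠ i) (hj : j ∈ t) : u j = 2 * w j := by simp [u, hji, hj]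
  have hu_notMem {j : ι} (hj : j ∉ t) : u j = 0 := by
    simp [u, hj, (ne_of_mem_of_not_mem hi hj).symm]
  have hu_sum : ∑ j, u j = 1 := by
    rw [← sum_subset (subset_univ t) fun j _ hj ↦ hu_notMem hj, ← add_sum_erase t u hi, hu_i,
      sum_congr rfl fun j hj ↦ hu_mem (ne_of_mem_erase hj) (mem_of_mem_erase hj), ← mul_sum]
    ring
  have hu_bounds (j : ι) : 0 ≤ u j ∧ u j ≤ 2 * w j := by
    have hwj := hw.1 j
    rcases eq_or_ne j i with rfl | hji
    · rw [hu_i]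
      constructor <;> linarith
    · by_cases hj : j ∈ t
      · rw [hu_mem hji hj]
        constructor <;> linarith
      · rw [hu_notMem hj]
        constructor <;> linarith
  refine ⟨u, ⟨fun j ↦ (hu_bounds j).1, hu_sum⟩, (2 : ℝ) • w - u,
    ⟨fun j ↦ sub_nonneg.2 (hu_bounds j).2, ?_⟩, ?_, fun _ ↦ hu_notMem, ?_⟩
  · simp only [Pi.sub_apply, Pi.smul_apply, sum_sub_distrib, ← smul_sum, hw.2, hu_sum]
    norm_num
  · rw [midpoint_eq_smul_add, invOf_eq_inv]
    module
  · intro j hji hj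
    by_cases hjt : j ∈ t
    · simp [hu_mem hji hjt]
    · simp [hu_notMem hjt, hj.resolve_left hjt]

lemma exists_minimal_half_lt_sum (hw : w ∈ stdSimplex ℝ ι) :
    ∃ t ⊆ univ.filter (w · ≠ 0), Minimal (fun s : Finset ι ↦ 1 / 2 < ∑ j ∈ s, w j) t := by
  refine exists_minimal_le_of_wellFoundedLT _ _ ?_
  rw [sum_filter_ne_zero, hw.2]
  norm_num

/-- Cutting the support of `w` at a median, which is shared by both halves. -/
lemma exists_midpoint_eq_card_support_le (hw : w ∈ stdSimplex ℝ ι) :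
    ∃ u ∈ stdSimplex ℝ ι, ∃ v ∈ stdSimplex ℝ ι, midpoint ℝ u v = w ∧
      ∃ a b : ℕ, a + b + 1 = #{j | w j ≠ 0} ∧ #{j | u j ≠ 0} ≤ a + 1 ∧ #{j | v j ≠ 0} ≤ b + 1 := by
  classical
  obtain ⟨t, hts, ht⟩ := exists_minimal_half_lt_sum hw
  obtain ⟨i, hi⟩ : t.Nonempty := nonempty_of_sum_ne_zero (f := w) (by linarith [ht.prop])
  obtain ⟨u, hu, v, hv, huv, hut, hvt⟩ := exists_midpoint_eq_of_sum_erase_le_half hw hi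
    (not_lt.1 (ht.not_prop_of_lt (erase_ssubset hi))) ht.prop.le
  have hsupp_u : univ.filter (u · ≠ 0) ⊆ t := by
    intro j hj
    by_contra hjt
    exact (mem_filter_univ j).1 hj (hut j hjt)
  have hsupp_v : univ.filter (v · ≠ 0) ⊆ insert i (univ.filter (w · ≠ 0) \ t) := by
    intro j hj
    simp only [mem_insert, mem_sdiff, mem_filter_univ] at hj ⊢
    by_contra! hj'
    exact hj (hvt j hj'.1 (by tauto))
  refine ⟨u, hu, v, hv, huv, #(t.erase i), #(univ.filter (w · ≠ 0) \ t), ?_, ?_, ?_⟩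
  · rw [add_right_comm, card_erase_add_one hi, add_comm, card_sdiff_add_card_eq_card hts]
  · rw [card_erase_add_one hi]
    exact card_le_card hsupp_u
  · exact (card_le_card hsupp_v).trans (card_insert_le _ _)

lemma eq_single_of_card_support_le_one [DecidableEq ι] (hw : w ∈ stdSimplex ℝ ι)
    (hcard : #{j | w j ≠ 0} ≤ 1) : ∃ i, w = Pi.single i 1 := by
  obtain ⟨i, -, hi⟩ : ∃ i ∈ univ, w i ≠ 0 :=
    exists_ne_zero_of_sum_ne_zero (hw.2.trans_ne one_ne_zero)
  have hne (j : ι) (hj : j ≠ i) : w j = 0 := by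
    by_contra hwj
    exact hj (card_le_one.1 hcard j (by simpa using hwj) i (by simpa using hi))
  refine ⟨i, funext fun j ↦ ?_⟩
  rcases eq_or_ne j i with rfl | hj
  · rw [Pi.single_eq_same, ← hw.2, Fintype.sum_eq_single _ hne]
  · rw [Pi.single_eq_of_ne hj, hne j hj]

/-- For a fixed size of the support, the supremum `M` of `g` satisfies `M ≤ (1 + M) / 2` unless the
bounds for smaller supports already give `M ≤ jensenError k`. -/
lemma ApproxMidpointConvexOn.le_jensenError [DecidableEq ι] {g : (ι → ℝ) → ℝ}
    (hg : ApproxMidpointConvexOn (stdSimplex ℝ ι) g) (hbdd : BddAbove (g '' stdSimplex ℝ ι))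
    (hvertex : ∀ i, g (Pi.single i 1) ≤ 0) {k : ℕ} (hw : w ∈ stdSimplex ℝ ι)
    (hcard : #{j | w j ≠ 0} ≤ k + 1) : g w ≤ jensenError k := by
  induction k using Nat.strong_induction_on generalizing w with
  | _ k ih =>
  rcases eq_or_ne k 0 with rfl | hk
  · obtain ⟨i, rfl⟩ := eq_single_of_card_support_le_one hw hcard
    exact (hvertex i).trans_eq jensenError_zero.symm
  let S := {w ∈ stdSimplex ℝ ι | #{j | w j ≠ 0} ≤ k + 1}
  have hS : BddAbove (g '' S) := hbdd.mono (Set.image_mono fun _ h ↦ h.1)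
  have hle_sup {v : ι → ℝ} (hv : v ∈ stdSimplex ℝ ι) (hvc : #{j | v j ≠ 0} ≤ k + 1) :
      g v ≤ sSup (g '' S) := le_csSup hS ⟨v, ⟨hv, hvc⟩, rfl⟩
  have hsup : sSup (g '' S) ≤ max (jensenError k) ((1 + sSup (g '' S)) / 2) := by
    refine csSup_le ⟨g w, w, ⟨hw, hcard⟩, rfl⟩ ?_
    rintro _ ⟨w', ⟨hw', hcard'⟩, rfl⟩
    obtain ⟨u, hu, v, hv, rfl, a, b, hab, hua, hvb⟩ := exists_midpoint_eq_card_support_le hw'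
    have hmid := hg u hu v hv
    rcases eq_or_ne a 0 with rfl | ha
    · have hgu := (ih 0 (by lia) hu hua).trans_eq jensenError_zero
      have hgv := hle_sup hv (by lia)
      exact le_max_of_le_right (by linarith)
    rcases eq_or_ne b 0 with rfl | hb
    · have hgu := hle_sup hu (by lia)
      have hgv := (ih 0 (by lia) hv hvb).trans_eq jensenError_zero
      exact le_max_of_le_right (by linarith)
    · have hgu := ih a (by lia) hu hua
      have hgv := ih b (by lia) hv hvb
      have hsum := jensenError_add_jensenError_le ha hb
      have hmono := jensenError_mono (show a + b ≤ k by lia)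
      exact le_max_of_le_left (by linarith)
  refine (hle_sup hw hcard).trans ?_
  have := one_le_jensenError hk
  rcases le_max_iff.1 hsup with h | h <;> linarith

end Simplex

section Jensen

variable {E ι κ : Type*} [AddCommGroup E] [Module ℝ E] [Fintype ι] [Fintype κ] {K : Set E}
  {f : E → ℝ}

theorem ApproxMidpointConvexOn.map_sum_le (hf : ApproxMidpointConvexOn K f) (hK : Convex ℝ K)
    (hbdd : BddAbove (f '' K)) {x : ι → E} (hx : ∀ i, x i ∈ K) {w : ι → ℝ}
    (hw : w ∈ stdSimplex ℝ ι) :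
    f (∑ i, w i • x i) ≤ ∑ i, w i * f (x i) + jensenError (Fintype.card ι - 1) := by
  classical
  let p := Fintype.linearCombination ℝ x
  let q := Fintype.linearCombination ℝ (f ∘ x)
  have hp (v : ι → ℝ) (hv : v ∈ stdSimplex ℝ ι) : p v ∈ K :=
    hK.sum_mem (fun i _ ↦ hv.1 i) hv.2 fun i _ ↦ hx i
  have hdefect : ApproxMidpointConvexOn (stdSimplex ℝ ι) fun v ↦ f (p v) - q v := by
    intro u hu v hv
    have hmid := hf (p u) (hp u hu) (p v) (hp v hv)
    have hpm : p (midpoint ℝ u v) = midpoint ℝ (p u) (p v) := p.toAffineMap.map_midpoint u v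
    have hqm : q (midpoint ℝ u v) = midpoint ℝ (q u) (q v) := q.toAffineMap.map_midpoint u v
    have hqm' : midpoint ℝ (q u) (q v) = 2⁻¹ * (q u + q v) := by
      rw [midpoint_eq_smul_add, invOf_eq_inv, smul_eq_mul]
    simp only [hpm, hqm, hqm']
    linarith
  have hdefect_bdd : BddAbove ((fun v ↦ f (p v) - q v) '' stdSimplex ℝ ι) := by
    obtain ⟨B, hB⟩ := hbdd
    obtain ⟨b, hb⟩ := (Set.finite_range (f ∘ x)).bddBelow
    refine ⟨B - b, ?_⟩
    rintro _ ⟨v, hv, rfl⟩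
    have hqv : b ≤ q v := (convex_Ici b).sum_mem (fun i _ ↦ hv.1 i) hv.2 fun i _ ↦ hb ⟨i, rfl⟩
    exact sub_le_sub (hB ⟨p v, hp v hv, rfl⟩) hqv
  have hvertex (i : ι) : f (p (Pi.single i 1)) - q (Pi.single i 1) ≤ 0 := by simp [p, q]
  have hcard : #{j | w j ≠ 0} ≤ Fintype.card ι - 1 + 1 := by
    have := card_filter_le (univ : Finset ι) (w · ≠ 0)
    rw [card_univ] at this
    lia
  exact sub_le_iff_le_add'.1 (hdefect.le_jensenError hdefect_bdd hvertex hw hcard)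

theorem ApproxMidpointConvexOn.sum_sub_sum_le (hf : ApproxMidpointConvexOn K f)
    (hf_neg : ApproxMidpointConvexOn K (-f)) (hK : Convex ℝ K) (hbdd : Bornology.IsBounded (f '' K))
    {x : ι → E} (hx : ∀ i, x i ∈ K) {y : κ → E} (hy : ∀ j, y j ∈ K) {u : ι → ℝ}
    (hu : u ∈ stdSimplex ℝ ι) {v : κ → ℝ} (hv : v ∈ stdSimplex ℝ κ)
    (huv : ∑ i, u i • x i = ∑ j, v j • y j) :
    ∑ i, u i * f (x i) - ∑ j, v j * f (y j) ≤
      jensenError (Fintype.card ι - 1) + jensenError (Fintype.card κ - 1) := by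
  have hbdd_neg : BddAbove ((-f) '' K) := by
    have := hbdd.bddBelow.neg
    rwa [← Set.image_neg_eq_neg, Set.image_image] at this
  have hupper := hf.map_sum_le hK hbdd.bddAbove hy hv
  have hlower := hf_neg.map_sum_le hK hbdd_neg hx hu
  simp only [Pi.neg_apply, mul_neg, sum_neg_distrib] at hlower
  rw [huv] at hlower
  linarith

end Jensen

section LinearInequalities

variable {ι V : Type*} [AddCommGroup V] [Module ℝ V]

lemma linearMap_eq_zero_of_forall_le {g : V →ₗ[ℝ] ℝ} {u : ℝ} (hg : ∀ v, u ≤ g v) :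
    g = 0 := by
  ext v
  by_contra hv
  have := hg (((u - 1) / g v) • v)
  rw [map_smul, smul_eq_mul, div_mul_cancel₀ _ hv] at this
  linarith

variable {g : (ι → ℝ) →ₗ[ℝ] ℝ} {b : ι → ℝ}

lemma apply_single_nonneg_of_forall_lt_zero [DecidableEq ι]
    (hg : ∀ y, (∀ i, y i < b i) → g y < 0) (i : ι) : 0 ≤ g (Pi.single i 1) := by
  by_contra! hi
  have hr : 0 < g (b - 1) / g (Pi.single i 1) :=
    div_pos_of_neg_of_neg (hg _ fun j ↦ sub_one_lt (b j)) hi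
  have hsingle : (0 : ι → ℝ) ≤ Pi.single i 1 := Pi.single_nonneg.2 zero_le_one
  have := hg (b - 1 - (g (b - 1) / g (Pi.single i 1)) • Pi.single i 1) fun j ↦
    (sub_le_self _ (mul_nonneg hr.le (hsingle j))).trans_lt (sub_one_lt (b j))
  rw [map_sub, map_smul, smul_eq_mul, div_mul_cancel₀ _ hi.ne, sub_self] at this
  exact this.false

lemma apply_nonpos_of_forall_lt_zero [Finite ι] (hg : ∀ y, (∀ i, y i < b i) → g y < 0) :
    g b ≤ 0 := by
  have hclosure : closure (Set.univ.pi fun i ↦ Set.Iio (b i)) ⊆ {y | g y ≤ 0} :=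
    closure_minimal (fun y hy ↦ (hg y fun i ↦ hy i trivial).le)
      (isClosed_le g.continuous_on_pi continuous_const)
  simp only [closure_pi_set, closure_Iio] at hclosure
  exact hclosure fun i _ ↦ Set.self_mem_Iic

lemma exists_mem_stdSimplex_of_forall_lt_zero [Fintype ι] (hg : ∀ y, (∀ i, y i < b i) → g y < 0) :
    ∃ w ∈ stdSimplex ℝ ι, ∑ i, w i * b i ≤ 0 ∧ ∃ r > 0, ∀ y, g y = r * ∑ i, w i * y i := by
  classical
  let c : ι → ℝ := fun i ↦ g (Pi.single i 1)
  have hgc (y : ι → ℝ) : g y = ∑ i, c i * y i := by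
    conv_lhs => rw [← univ_sum_single y]
    refine (map_sum g _ _).trans (sum_congr rfl fun i _ ↦ ?_)
    rw [mul_comm, ← smul_eq_mul, ← map_smul, ← Pi.single_smul, smul_eq_mul, mul_one]
  have hc (i : ι) : 0 ≤ c i := apply_single_nonneg_of_forall_lt_zero hg i
  have hr : 0 < ∑ i, c i := by
    refine (sum_nonneg fun i _ ↦ hc i).lt_of_ne' fun h ↦ (hg _ fun i ↦ sub_one_lt (b i)).ne ?_
    rw [hgc]
    exact sum_eq_zero fun i hi ↦ by
      rw [(sum_eq_zero_iff_of_nonneg fun i _ ↦ hc i).1 h i hi, zero_mul]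
  have hnormalize (y : ι → ℝ) : ∑ i, ((∑ j, c j)⁻¹ • c) i * y i = (∑ j, c j)⁻¹ * g y := by
    simp only [hgc, Pi.smul_apply, smul_eq_mul, mul_sum, mul_assoc]
  refine ⟨(∑ j, c j)⁻¹ • c, ⟨fun i ↦ mul_nonneg (inv_nonneg.2 hr.le) (hc i), ?_⟩, ?_, ∑ j, c j, hr,
    fun y ↦ ?_⟩
  · simp only [Pi.smul_apply, smul_eq_mul, ← mul_sum, inv_mul_cancel₀ hr.ne']
  · rw [hnormalize]
    exact mul_nonpos_of_nonneg_of_nonpos (inv_nonneg.2 hr.le) (apply_nonpos_of_forall_lt_zero hg)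
  · rw [hnormalize, mul_inv_cancel_left₀ hr.ne']

/-- Carver's theorem of the alternative, by separating the open orthant below `b` from the range of
`l`. -/
theorem exists_forall_lt_of_forall_stdSimplex [Fintype ι] (l : ι → V →ₗ[ℝ] ℝ) (b : ι → ℝ)
    (h : ∀ w ∈ stdSimplex ℝ ι, ∑ i, w i • l i = 0 → 0 < ∑ i, w i * b i) :
    ∃ v, ∀ i, l i v < b i := by
  by_contra! hinfeasible
  have hdisj : Disjoint (Set.univ.pi fun i ↦ Set.Iio (b i)) (LinearMap.range (LinearMap.pi l)) := by
    rw [Set.disjoint_right]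
    rintro _ ⟨v, rfl⟩ hv
    obtain ⟨i, hi⟩ := hinfeasible v
    exact hi.not_gt (hv i trivial)
  obtain ⟨g, u, hgu, hug⟩ := geometric_hahn_banach_open
    (convex_pi fun i _ ↦ convex_Iio (b i)) (isOpen_set_pi Set.finite_univ fun i _ ↦ isOpen_Iio)
    (LinearMap.range (LinearMap.pi l)).convex hdisj
  have hu : u ≤ 0 := by simpa using hug 0 (zero_mem _)
  have hg_range : g.toLinearMap ∘ₗ LinearMap.pi l = 0 :=
    linearMap_eq_zero_of_forall_le fun v ↦ hug _ ⟨v, rfl⟩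
  obtain ⟨w, hw, hwb, r, hr, hgw⟩ := exists_mem_stdSimplex_of_forall_lt_zero
    (g := g.toLinearMap) fun y hy ↦ (hgu y fun i _ ↦ hy i).trans_le hu
  refine (h w hw ?_).not_ge hwb
  ext v
  have := (hgw _).symm.trans (LinearMap.congr_fun hg_range v)
  simpa [hr.ne'] using this

end LinearInequalities

section AffineMap

variable {E ι κ : Type*} [AddCommGroup E] [Module ℝ E] [Fintype ι] [Fintype κ]

/-- The coercion of affine functions to functions, as a linear map; composed with projections it
gives the evaluation functionals, and composed with `LinearMap.funLeft` the restriction to a set. -/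
def affineCoeFn (E : Type*) [AddCommGroup E] [Module ℝ E] : (E →ᵃ[ℝ] ℝ) →ₗ[ℝ] E → ℝ where
  toFun φ := φ
  map_add' _ _ := rfl
  map_smul' _ _ := rfl

lemma sum_eq_of_forall_affineMap {x : ι → E} {y : κ → E} {u : ι → ℝ} {v : κ → ℝ}
    (h : ∀ φ : E →ᵃ[ℝ] ℝ, ∑ i, u i * φ (x i) = ∑ j, v j * φ (y j)) :
    ∑ i, u i = ∑ j, v j ∧ ∑ i, u i • x i = ∑ j, v j • y j := by
  refine ⟨by simpa using h (AffineMap.const ℝ E 1), ?_⟩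
  rw [← sub_eq_zero, ← Module.forall_dual_apply_eq_zero_iff ℝ]
  intro ψ
  simpa [sub_eq_zero] using h ψ.toAffineMap

theorem exists_affineMap_lt_and_lt {x : ι → E} {y : κ → E} {p : ι → ℝ} {q : κ → ℝ}
    (h : ∀ u ∈ stdSimplex ℝ ι, ∀ v ∈ stdSimplex ℝ κ, ∑ i, u i • x i = ∑ j, v j • y j →
      ∑ j, v j * q j < ∑ i, u i * p i) :
    ∃ φ : E →ᵃ[ℝ] ℝ, (∀ i, φ (x i) < p i) ∧ ∀ j, q j < φ (y j) := by
  let eval (z : E) : (E →ᵃ[ℝ] ℝ) →ₗ[ℝ] ℝ := LinearMap.proj z ∘ₗ affineCoeFn E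
  let l : ι ⊕ κ → (E →ᵃ[ℝ] ℝ) →ₗ[ℝ] ℝ := Sum.elim (fun i ↦ eval (x i)) fun j ↦ -eval (y j)
  suffices hdual : ∀ w ∈ stdSimplex ℝ (ι ⊕ κ), ∑ k, w k • l k = 0 →
      0 < ∑ k, w k * Sum.elim p (-q) k by
    obtain ⟨φ, hφ⟩ := exists_forall_lt_of_forall_stdSimplex l _ hdual
    exact ⟨φ, fun i ↦ hφ (.inl i), fun j ↦ neg_lt_neg_iff.1 (hφ (.inr j))⟩
  intro w hw hw0
  obtain ⟨hmass, hbary⟩ := sum_eq_of_forall_affineMap (x := x) (y := y) (u := w ∘ Sum.inl)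
    (v := w ∘ Sum.inr) fun φ ↦ by
      simpa [l, eval, affineCoeFn, ← sub_eq_add_neg, sub_eq_zero] using LinearMap.congr_fun hw0 φ
  have htotal := hw.2
  simp only [Function.comp_apply, Fintype.sum_sum_type] at hmass htotal
  have hlt := h (fun i ↦ 2 * w (.inl i)) ⟨fun i ↦ by linarith [hw.1 (.inl i)], ?_⟩
    (fun j ↦ 2 * w (.inr j)) ⟨fun j ↦ by linarith [hw.1 (.inr j)], ?_⟩ ?_
  · simp only [mul_assoc, ← mul_sum] at hlt
    simp only [Fintype.sum_sum_type, Sum.elim_inl, Sum.elim_inr, Pi.neg_apply, mul_neg,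
      sum_neg_distrib]
    linarith
  · rw [← mul_sum]
    linarith
  · rw [← mul_sum]
    linarith
  · simpa only [mul_smul, ← smul_sum, Function.comp_apply] using congrArg ((2 : ℝ) • ·) hbary

lemma exists_affineMap_eq_add_sum (φ : (ι → ℝ) →ᵃ[ℝ] ℝ) :
    ∃ (c : ℝ) (a : ι → ℝ), ∀ x, φ x = c + ∑ i, a i * x i := by
  classical
  refine ⟨φ 0, fun i ↦ φ.linear fun j ↦ if i = j then 1 else 0, fun x ↦ ?_⟩
  have hdecomp : φ x = φ.linear x + φ 0 := congrFun φ.decomp x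
  simp only [hdecomp, LinearMap.pi_apply_eq_sum_univ φ.linear x, smul_eq_mul, mul_comm, add_comm]

end AffineMap

section Helly

variable {E : Type*} [AddCommGroup E] [Module ℝ E] [FiniteDimensional ℝ E]

/-- Helly's theorem for half-spaces in the space of affine functions, which has dimension
`finrank ℝ E + 1`. -/
theorem exists_affineMap_mem_Ioo {p q : E → ℝ} {s : Finset E}
    (h : ∀ t ⊆ s, ∀ t' ⊆ s, #t + #t' ≤ Module.finrank ℝ E + 2 →
      ∃ φ : E →ᵃ[ℝ] ℝ, (∀ x ∈ t, φ x < p x) ∧ ∀ x ∈ t', q x < φ x) :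
    ∃ φ : E →ᵃ[ℝ] ℝ, ∀ x ∈ s, φ x ∈ Set.Ioo (q x) (p x) := by
  let eval (x : E) : (E →ᵃ[ℝ] ℝ) →ₗ[ℝ] ℝ := LinearMap.proj x ∘ₗ affineCoeFn E
  let halfSpace : E ⊕ E → Set (E →ᵃ[ℝ] ℝ) :=
    Sum.elim (fun x ↦ {φ | eval x φ < p x}) fun x ↦ {φ | q x < eval x φ}
  obtain ⟨φ, hφ⟩ : (⋂ k ∈ s.disjSum s, halfSpace k).Nonempty := by
    refine Convex.helly_theorem' (𝕜 := ℝ) ?_ fun I hI hcard ↦ ?_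
    · rintro (x | x) -
      · exact convex_halfSpace_lt (eval x).isLinear _
      · exact convex_halfSpace_gt (eval x).isLinear _
    · rw [AffineMap.finrank_eq, Module.finrank_self, mul_one,
        ← card_toLeft_add_card_toRight] at hcard
      obtain ⟨φ, hp, hq⟩ := h I.toLeft (fun x hx ↦ inl_mem_disjSum.1 (hI (mem_toLeft.1 hx)))
        I.toRight (fun x hx ↦ inr_mem_disjSum.1 (hI (mem_toRight.1 hx))) hcard
      refine ⟨φ, Set.mem_iInter₂.2 ?_⟩
      rintro (x | x) hx
      · exact hp x (mem_toLeft.2 hx)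
      · exact hq x (mem_toRight.2 hx)
  rw [Set.mem_iInter₂] at hφ
  exact ⟨φ, fun x hx ↦ ⟨hφ _ (inr_mem_disjSum.2 hx), hφ _ (inl_mem_disjSum.2 hx)⟩⟩

end Helly

section FiniteDimensional

open scoped Pointwise in
/-- The functions within `C` of `W` form a closed set in the product topology, and `f` lies in its
closure. -/
theorem exists_mem_forall_abs_sub_le {X : Type*} (W : Submodule ℝ (X → ℝ))
    [FiniteDimensional ℝ W] {f : X → ℝ} {C : ℝ}
    (h : ∀ s : Finset X, ∃ g ∈ W, ∀ x ∈ s, |f x - g x| ≤ C) :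
    ∃ g ∈ W, ∀ x, |f x - g x| ≤ C := by
  classical
  let box : Set (X → ℝ) := Set.univ.pi fun _ ↦ Set.Icc (-C) C
  have hclosed : IsClosed ((W : Set (X → ℝ)) + box) :=
    W.closed_of_finiteDimensional.add_right_of_isCompact
      (isCompact_univ_pi fun _ ↦ isCompact_Icc)
  have hC (x : X) : 0 ≤ C := by
    obtain ⟨g, -, hg⟩ := h {x}
    exact (abs_nonneg _).trans (hg x (mem_singleton_self x))
  have hf : f ∈ closure ((W : Set (X → ℝ)) + box) := by
    rw [mem_closure_iff]
    intro o ho hfo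
    obtain ⟨s, u, hu, huo⟩ := isOpen_pi_iff.1 ho f hfo
    obtain ⟨g, hgW, hg⟩ := h s
    refine ⟨g + fun x ↦ if x ∈ s then f x - g x else 0, huo fun x hx ↦ ?_, g, hgW, _, ?_, rfl⟩
    · simpa [mem_coe.1 hx] using (hu x hx).2
    · intro x _
      change (if x ∈ s then f x - g x else 0) ∈ Set.Icc (-C) C
      split_ifs with hx
      · exact abs_le.1 (hg x hx)
      · simpa using hC x
  rw [hclosed.closure_eq] at hf
  obtain ⟨g, hgW, e, he, rfl⟩ := hf
  exact ⟨g, hgW, fun x ↦ by simpa [abs_le] using he x trivial⟩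

end FiniteDimensional

section Whitney

variable {E ι κ : Type*} [AddCommGroup E] [Module ℝ E] [Fintype ι] [Fintype κ] {K : Set E}
  {f : E → ℝ}

lemma exists_affineMap_lt_add_and_sub_lt (hf : ApproxMidpointConvexOn K f)
    (hf_neg : ApproxMidpointConvexOn K (-f)) (hK : Convex ℝ K) (hbdd : Bornology.IsBounded (f '' K))
    {x : ι → E} (hx : ∀ i, x i ∈ K) {y : κ → E} (hy : ∀ j, y j ∈ K) {n : ℕ}
    (hcard : Fintype.card ι + Fintype.card κ ≤ n + 2) :
    ∃ φ : E →ᵃ[ℝ] ℝ, (∀ i, φ (x i) < f (x i) + ((1 / 2) * Nat.log 2 n + 1)) ∧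
      ∀ j, f (y j) - ((1 / 2) * Nat.log 2 n + 1) < φ (y j) := by
  refine exists_affineMap_lt_and_lt fun u hu v hv huv ↦ ?_
  have := Fintype.card_pos_iff.2 (nonempty_of_mem_stdSimplex hu)
  have := Fintype.card_pos_iff.2 (nonempty_of_mem_stdSimplex hv)
  have hgap := hf.sum_sub_sum_le hf_neg hK hbdd hy hx hv hu huv.symm
  have herror := jensenError_add_jensenError_lt
    (show (Fintype.card κ - 1) + (Fintype.card ι - 1) ≤ n by lia)
  simp only [mul_add, mul_sub, sum_add_distrib, sum_sub_distrib, ← sum_mul, hu.2, hv.2]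
  linarith

variable [FiniteDimensional ℝ E]

lemma exists_affineMap_abs_sub_le_finset (hf : ApproxMidpointConvexOn K f)
    (hf_neg : ApproxMidpointConvexOn K (-f)) (hK : Convex ℝ K) (hbdd : Bornology.IsBounded (f '' K))
    {s : Finset E} (hs : ↑s ⊆ K) :
    ∃ φ : E →ᵃ[ℝ] ℝ, ∀ x ∈ s, |f x - φ x| ≤ (1 / 2) * Nat.log 2 (Module.finrank ℝ E) + 1 := by
  let C : ℝ := (1 / 2) * Nat.log 2 (Module.finrank ℝ E) + 1
  obtain ⟨φ, hφ⟩ := exists_affineMap_mem_Ioo (s := s) (p := fun x ↦ f x + C)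
    (q := fun x ↦ f x - C) fun t ht t' ht' hcard ↦ by
    obtain ⟨φ, hp, hq⟩ := exists_affineMap_lt_add_and_sub_lt hf hf_neg hK hbdd
      (x := ((↑) : t → E)) (fun x ↦ hs (ht x.2)) (y := ((↑) : t' → E)) (fun x ↦ hs (ht' x.2))
      (by simpa using hcard)
    exact ⟨φ, fun x hx ↦ hp ⟨x, hx⟩, fun x hx ↦ hq ⟨x, hx⟩⟩
  refine ⟨φ, fun x hx ↦ abs_le.2 ?_⟩
  obtain ⟨hq, hp⟩ := hφ x hx
  change -C ≤ f x - φ x ∧ f x - φ x ≤ C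
  constructor <;> linarith

theorem exists_affineMap_abs_sub_le_of_finset {C : ℝ}
    (h : ∀ s : Finset E, ↑s ⊆ K → ∃ φ : E →ᵃ[ℝ] ℝ, ∀ x ∈ s, |f x - φ x| ≤ C) :
    ∃ φ : E →ᵃ[ℝ] ℝ, ∀ x ∈ K, |f x - φ x| ≤ C := by
  classical
  let restrict : (E →ᵃ[ℝ] ℝ) →ₗ[ℝ] K → ℝ := LinearMap.funLeft ℝ ℝ Subtype.val ∘ₗ affineCoeFn E
  obtain ⟨_, ⟨φ, rfl⟩, hφ⟩ := exists_mem_forall_abs_sub_le (LinearMap.range restrict)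
    (f := fun x ↦ f x) (C := C) fun s ↦ by
      obtain ⟨φ, hφ⟩ := h (s.image Subtype.val) (by simp [Set.image_subset_iff])
      exact ⟨restrict φ, ⟨φ, rfl⟩, fun x hx ↦ hφ x (mem_image_of_mem _ hx)⟩
  exact ⟨φ, fun x hx ↦ hφ ⟨x, hx⟩⟩

end Whitney

theorem whitney_upper_bound_dim_n_general {E : Type*} [AddCommGroup E] [Module ℝ E]
    [FiniteDimensional ℝ E] {K : Set E} (hK : Convex ℝ K) {f : E → ℝ}
    (hbdd : Bornology.IsBounded (f '' K)) (hω : diffBound 2 K f 1) :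
    ∃ φ : E →ᵃ[ℝ] ℝ,
      ∀ x ∈ K, |f x - φ x| ≤ (1 / 2) * Nat.log 2 (Module.finrank ℝ E) + 1 :=
  exists_affineMap_abs_sub_le_of_finset fun _ hs ↦
    exists_affineMap_abs_sub_le_finset (hω.approxMidpointConvexOn hK)
      (hω.approxMidpointConvexOn_neg hK) hK hbdd hs

/-- Upper bound of Theorem 3.1: `w₂(n) ≤ (1/2)⌊log₂ n⌋ + 5/4`. -/
theorem whitney_upper_bound_dim_n (n : ℕ) (hn : 1 ≤ n) (K : Set (Fin n → ℝ))
    (hne : K.Nonempty) (hcl : IsClosed K) (hbd : Bornology.IsBounded K) (hconv : Convex ℝ K)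
    (f : (Fin n → ℝ) → ℝ) (hf : ContinuousOn f K) (hω : diffBound 2 K f 1) :
    ∃ (c : ℝ) (a : Fin n → ℝ), ∀ x ∈ K,
      |f x - (c + ∑ i, a i * x i)| ≤ (1 / 2) * (Nat.log 2 n : ℝ) + 5 / 4 := by
  have hcomp : IsCompact K := Metric.isCompact_of_isClosed_isBounded hcl hbd
  obtain ⟨φ, hφ⟩ := whitney_upper_bound_dim_n_general hconv
    (hcomp.image_of_continuousOn hf).isBounded hω
  obtain ⟨c, a, hca⟩ := exists_affineMap_eq_add_sum φ
  refine ⟨c, a, fun x hx ↦ (hca x ▸ hφ x hx).trans ?_⟩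
  rw [Module.finrank_fin_fun]
  gcongr
  norm_num
end

section
/- For every n ≥ 1 there exist a nonempty compact convex set K ⊆ ℝⁿ and a continuous function f : K → ℝ with ω₂(f;K) ≤ 1 such that for every affine function φ on ℝⁿ one has sup_{x∈K} |f(x) − φ(x)| ≥ (1/2) log₂(⌊n/2⌋ + 1). (Lower bound of Theorem 3.1: w₂(n) ≥ (1/2) log₂(⌊n/2⌋+1).) -/
open Finset

/-! Let `h` be the Shannon entropy, in bits, of the barycentric coordinates on a simplex with `N`
vertices. It is concave, vanishes at the vertices and equals `log₂ N` at the centroid, yet its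
second differences never leave `[-2, 0]`, whatever `N`: halving a vector `p + q` adds just one bit
per unit of mass to `∑ -pᵢ log₂ pᵢ`, which is subadditive. On the product of two copies of the
simplex take `(x, y) ↦ (h x - h y) / 2`. An affine `φ` that is nonpositive at the pair of centroids
stays so after a suitable vertex is substituted for the second centroid, and there the function is
`(log₂ N) / 2`; if `φ` is positive, exchange the two factors. With `N = ⌊n/2⌋ + 1` the product has
dimension at most `n`. -/

section Entropy

open Real

lemma negMulLog_add_le {p q : ℝ} (hp : 0 ≤ p) (hq : 0 ≤ q) :
    negMulLog (p + q) ≤ negMulLog p + negMulLog q := by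
  have mul_log_le {x s : ℝ} (hx : 0 ≤ x) (hxs : x ≤ s) : x * log x ≤ x * log s := by
    rcases hx.eq_or_lt with rfl | hx
    · simp
    · gcongr
  have hp_le := mul_log_le hp (le_add_of_nonneg_right hq)
  have hq_le := mul_log_le hq (le_add_of_nonneg_left hp)
  simp only [negMulLog]
  linarith

lemma two_mul_negMulLog_half (s : ℝ) : 2 * negMulLog (s / 2) = negMulLog s + s * log 2 := by
  rw [div_eq_mul_inv, negMulLog_mul, negMulLog, negMulLog, log_inv]
  ring

lemma negMulLog_secondDiff_mem_Icc {p q : ℝ} (hp : 0 ≤ p) (hq : 0 ≤ q) :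
    negMulLog p - 2 * negMulLog ((p + q) / 2) + negMulLog q ∈ Set.Icc (-((p + q) * log 2)) 0 := by
  constructor
  · linarith [negMulLog_add_le hp hq, two_mul_negMulLog_half (p + q)]
  · have concave := concaveOn_negMulLog.2 (Set.mem_Ici.2 hp) (Set.mem_Ici.2 hq)
      one_half_pos.le one_half_pos.le (add_halves 1)
    have midpoint_eq : (1 / 2 : ℝ) • p + (1 / 2 : ℝ) • q = (p + q) / 2 := by
      simp only [smul_eq_mul]; ring
    rw [midpoint_eq, smul_eq_mul, smul_eq_mul] at concave
    linarith

variable {ι : Type*} [Fintype ι]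

/-- The Shannon entropy, in bits, of a probability vector `p`; the convention `0 log 0 = 0` is built
into `Real.negMulLog`. -/
noncomputable def shannonEntropy (p : ι → ℝ) : ℝ :=
  (∑ i, negMulLog (p i)) / log 2

lemma continuous_shannonEntropy : Continuous (shannonEntropy (ι := ι)) := by
  unfold shannonEntropy
  fun_prop

lemma shannonEntropy_single [DecidableEq ι] (i : ι) : shannonEntropy (Pi.single i 1) = 0 := by
  simp [shannonEntropy, Pi.single_apply, apply_ite negMulLog]

lemma shannonEntropy_uniform [Nonempty ι] :
    shannonEntropy (fun _ : ι ↦ (Fintype.card ι : ℝ)⁻¹) = logb 2 (Fintype.card ι) := by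
  simp [shannonEntropy, negMulLog, logb]

lemma shannonEntropy_secondDiff_mem_Icc {p q : ι → ℝ} (hp : p ∈ stdSimplex ℝ ι)
    (hq : q ∈ stdSimplex ℝ ι) :
    shannonEntropy p - 2 * shannonEntropy (midpoint ℝ p q) + shannonEntropy q ∈
      Set.Icc (-2) 0 := by
  have log_two_pos : 0 < log 2 := log_pos one_lt_two
  have termwise i := negMulLog_secondDiff_mem_Icc (hp.1 i) (hq.1 i)
  have sum_eq : shannonEntropy p - 2 * shannonEntropy (midpoint ℝ p q) + shannonEntropy q =
      (∑ i, (negMulLog (p i) - 2 * negMulLog ((p i + q i) / 2) + negMulLog (q i))) / log 2 := by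
    simp only [shannonEntropy, sum_add_distrib, sum_sub_distrib, ← mul_sum, pi_midpoint_apply,
      midpoint_eq_smul_add, invOf_eq_inv, smul_eq_mul, inv_mul_eq_div]
    ring
  have mass : ∑ i, -((p i + q i) * log 2) = -2 * log 2 := by
    rw [sum_neg_distrib, ← sum_mul, sum_add_distrib, hp.2, hq.2]
    ring
  rw [sum_eq]
  constructor
  · rw [le_div_iff₀ log_two_pos, ← mass]
    exact sum_le_sum fun i _ ↦ (termwise i).1
  · exact div_nonpos_of_nonpos_of_nonneg (sum_nonpos fun i _ ↦ (termwise i).2) log_two_pos.le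

end Entropy

namespace diffBound

variable {E F : Type*} [AddCommGroup E] [Module ℝ E] [AddCommGroup F] [Module ℝ F]

lemma two_of_midpoint {K : Set E} {f : E → ℝ} {c : ℝ}
    (hf : ∀ x ∈ K, ∀ y ∈ K, |f x - 2 * f (midpoint ℝ x y) + f y| ≤ c) : diffBound 2 K f c := by
  intro x h hK
  have hx : x ∈ K := by simpa using hK 0 zero_le_two
  have hy : x + (2 : ℝ) • h ∈ K := by simpa using hK 2 le_rfl
  have midpoint_eq : midpoint ℝ x (x + (2 : ℝ) • h) = x + h := by
    rw [midpoint_eq_smul_add, invOf_eq_inv]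
    module
  convert hf x hx _ hy using 2
  rw [midpoint_eq]
  norm_num [sum_range_succ]
  ring

lemma comp_affineMap {m : ℕ} {K : Set E} {f : E → ℝ} {c : ℝ} (hf : diffBound m K f c)
    {L : Set F} (g : F →ᵃ[ℝ] E) (hg : Set.MapsTo g L K) : diffBound m L (f ∘ g) c := by
  intro x h hL
  have map_step (t : ℝ) : g (x + t • h) = g x + t • g.linear h := by
    rw [add_comm x, ← vadd_eq_add, g.map_vadd, map_smul, vadd_eq_add, add_comm]
  simp only [Function.comp_apply, map_step]
  exact hf _ _ fun j hj ↦ map_step j ▸ hg (hL j hj)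

end diffBound

section HalfDifference

variable {V : Type*}

/-- The function `(x, y) ↦ (h x - h y) / 2` on a product of two copies of the domain of `h`. Its
antisymmetry lets one bound on affine approximations serve for both signs of the error. -/
noncomputable def halfDifference (h : V → ℝ) (z : V × V) : ℝ :=
  (h z.1 - h z.2) / 2

lemma continuous_halfDifference [TopologicalSpace V] {h : V → ℝ} (hh : Continuous h) :
    Continuous (halfDifference h) := by
  unfold halfDifference
  fun_prop

variable [AddCommGroup V] [Module ℝ V]

lemma diffBound_two_halfDifference {S : Set V} {h : V → ℝ} {c : ℝ}
    (hh : ∀ x ∈ S, ∀ y ∈ S, h x - 2 * h (midpoint ℝ x y) + h y ∈ Set.Icc (-(2 * c)) 0) :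
    diffBound 2 (S ×ˢ S) (halfDifference h) c := by
  refine diffBound.two_of_midpoint ?_
  rintro ⟨x₁, x₂⟩ ⟨hx₁, hx₂⟩ ⟨y₁, y₂⟩ ⟨hy₁, hy₂⟩
  have fst_bound := hh x₁ hx₁ y₁ hy₁
  have snd_bound := hh x₂ hx₂ y₂ hy₂
  have midpoint_eq : midpoint ℝ (x₁, x₂) (y₁, y₂) = (midpoint ℝ x₁ y₁, midpoint ℝ x₂ y₂) := by
    simp [midpoint_eq_smul_add]
  rw [midpoint_eq, abs_le]
  simp only [halfDifference]
  constructor <;> linarith [fst_bound.1, fst_bound.2, snd_bound.1, snd_bound.2]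

lemma exists_half_le_abs_halfDifference_sub {T : Set V} {h : V → ℝ} (hT : ∀ v ∈ T, h v = 0)
    {b : V} (hb : b ∈ convexHull ℝ T) (φ : V × V →ᵃ[ℝ] ℝ) :
    ∃ z ∈ convexHull ℝ T ×ˢ convexHull ℝ T, h b / 2 ≤ |halfDifference h z - φ z| := by
  rcases le_total (φ (b, b)) 0 with hφ | hφ
  · have : ConcaveOn ℝ Set.univ fun y ↦ φ (b, y) :=
      (concaveOn_id convex_univ).comp_affineMap
        (φ.comp ((AffineMap.const ℝ V b).prod (AffineMap.id ℝ V)))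
    obtain ⟨v, hv, hφv⟩ := this.exists_le_of_mem_convexHull T.subset_univ hb
    refine ⟨(b, v), ⟨hb, subset_convexHull ℝ T hv⟩, le_trans ?_ (le_abs_self _)⟩
    rw [halfDifference, hT v hv]
    linarith
  · have : ConvexOn ℝ Set.univ fun x ↦ φ (x, b) :=
      (convexOn_id convex_univ).comp_affineMap
        (φ.comp ((AffineMap.id ℝ V).prod (AffineMap.const ℝ V b)))
    obtain ⟨v, hv, hφv⟩ := this.exists_ge_of_mem_convexHull T.subset_univ hb
    refine ⟨(v, b), ⟨subset_convexHull ℝ T hv, hb⟩, le_trans ?_ (neg_le_abs _)⟩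
    rw [halfDifference, hT v hv]
    linarith

end HalfDifference

section Simplex

variable {ι V : Type*} [Fintype ι] [AddCommGroup V] [Module ℝ V]

lemma coords_mem_stdSimplex (b : AffineBasis ι ℝ V) {x : V}
    (hx : x ∈ convexHull ℝ (Set.range b)) : b.coords x ∈ stdSimplex ℝ ι := by
  rw [b.convexHull_eq_nonneg_coord] at hx
  exact ⟨hx, b.sum_coord_apply_eq_one x⟩

/-- The Shannon entropy of the barycentric coordinates with respect to `b`, meaningful on the
simplex spanned by `b`, where the coordinates are nonnegative. -/
noncomputable def simplexEntropy (b : AffineBasis ι ℝ V) (x : V) : ℝ :=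
  shannonEntropy (b.coords x)

lemma simplexEntropy_vertex (b : AffineBasis ι ℝ V) (i : ι) : simplexEntropy b (b i) = 0 := by
  classical
  have coords_vertex : b.coords (b i) = Pi.single i 1 := by
    ext j
    rw [b.coords_apply, b.coord_apply, Pi.single_apply]
  rw [simplexEntropy, coords_vertex, shannonEntropy_single]

lemma simplexEntropy_centroid (b : AffineBasis ι ℝ V) :
    simplexEntropy b (univ.centroid ℝ b) = Real.logb 2 (Fintype.card ι) := by
  have := b.nonempty
  have coords_centroid : b.coords (univ.centroid ℝ b) = fun _ ↦ (Fintype.card ι : ℝ)⁻¹ := by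
    ext i
    rw [b.coords_apply, b.coord_apply_centroid (mem_univ i), card_univ]
  rw [simplexEntropy, coords_centroid, shannonEntropy_uniform]

lemma simplexEntropy_secondDiff_mem_Icc (b : AffineBasis ι ℝ V) {x y : V}
    (hx : x ∈ convexHull ℝ (Set.range b)) (hy : y ∈ convexHull ℝ (Set.range b)) :
    simplexEntropy b x - 2 * simplexEntropy b (midpoint ℝ x y) + simplexEntropy b y ∈
      Set.Icc (-2) 0 := by
  simp only [simplexEntropy, b.coords.map_midpoint]
  exact shannonEntropy_secondDiff_mem_Icc (coords_mem_stdSimplex b hx) (coords_mem_stdSimplex b hy)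

end Simplex

lemma continuous_simplexEntropy {ι V : Type*} [Fintype ι] [NormedAddCommGroup V]
    [NormedSpace ℝ V] [FiniteDimensional ℝ V] (b : AffineBasis ι ℝ V) :
    Continuous (simplexEntropy b) :=
  continuous_shannonEntropy.comp b.coords.continuous_of_finiteDimensional

lemma exists_linearMap_leftInverse_of_finrank_le {k E F : Type*} [Field k] [AddCommGroup E]
    [Module k E] [FiniteDimensional k E] [AddCommGroup F] [Module k F] [FiniteDimensional k F]
    (h : Module.finrank k E ≤ Module.finrank k F) :
    ∃ (s : E →ₗ[k] F) (p : F →ₗ[k] E), Function.LeftInverse p s := by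
  obtain ⟨s, hs⟩ := finrank_le_iff_exists_linearMap.1 h
  obtain ⟨p, hp⟩ := s.exists_leftInverse_of_injective (LinearMap.ker_eq_bot.2 hs)
  exact ⟨s, p, LinearMap.congr_fun hp⟩

theorem whitney_lower_bound_dim_n_general (F : Type*) [AddCommGroup F] [Module ℝ F]
    [TopologicalSpace F] [IsTopologicalAddGroup F] [ContinuousSMul ℝ F] [T2Space F]
    [FiniteDimensional ℝ F] :
    ∃ (K : Set F) (f : F → ℝ),
      K.Nonempty ∧ IsCompact K ∧ Convex ℝ K ∧ Continuous f ∧ diffBound 2 K f 1 ∧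
      ∀ φ : F →ᵃ[ℝ] ℝ, ∃ x ∈ K,
        (1 / 2) * Real.logb 2 ((Module.finrank ℝ F / 2 : ℕ) + 1) ≤ |f x - φ x| := by
  set m := Module.finrank ℝ F / 2
  obtain ⟨b⟩ : Nonempty (AffineBasis (Fin (m + 1)) ℝ (Fin m → ℝ)) :=
    AffineBasis.exists_affineBasis_of_finiteDimensional (by simp)
  obtain ⟨s, p, hps⟩ := exists_linearMap_leftInverse_of_finrank_le (k := ℝ)
    (E := (Fin m → ℝ) × (Fin m → ℝ)) (F := F) (by
      rw [Module.finrank_prod, Module.finrank_fin_fun]; omega)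
  let Δ := convexHull ℝ (Set.range b)
  have p_mapsTo : Set.MapsTo p (s '' (Δ ×ˢ Δ)) (Δ ×ˢ Δ) := by
    rintro _ ⟨z, hz, rfl⟩
    rwa [hps z]
  have Δ_compact : IsCompact Δ := (Set.finite_range b).isCompact_convexHull ℝ
  have Δ_convex : Convex ℝ Δ := convex_convexHull ℝ _
  have centroid_mem : univ.centroid ℝ b ∈ Δ := interior_subset b.centroid_mem_interior_convexHull
  refine ⟨s '' (Δ ×ˢ Δ), halfDifference (simplexEntropy b) ∘ p, ?_, ?_, ?_, ?_, ?_, fun φ ↦ ?_⟩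
  · exact (Set.Nonempty.prod ⟨_, centroid_mem⟩ ⟨_, centroid_mem⟩).image s
  · exact (Δ_compact.prod Δ_compact).image s.continuous_of_finiteDimensional
  · exact (Δ_convex.prod Δ_convex).linear_image s
  · exact (continuous_halfDifference (continuous_simplexEntropy b)).comp
      p.continuous_of_finiteDimensional
  · refine (diffBound_two_halfDifference fun x hx y hy ↦ ?_).comp_affineMap p.toAffineMap p_mapsTo
    simpa using simplexEntropy_secondDiff_mem_Icc b hx hy
  · obtain ⟨z, hz, hφ⟩ := exists_half_le_abs_halfDifference_sub
      (Set.forall_mem_range.2 (simplexEntropy_vertex b)) centroid_mem (φ.comp s.toAffineMap)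
    refine ⟨s z, Set.mem_image_of_mem s hz, ?_⟩
    rw [simplexEntropy_centroid] at hφ
    simpa [hps z, div_eq_inv_mul] using hφ

/-- Lower bound of Theorem 3.1: `w₂(n) ≥ (1/2) log₂(⌊n/2⌋ + 1)`. -/
theorem whitney_lower_bound_dim_n (n : ℕ) (hn : 1 ≤ n) :
    ∃ (K : Set (Fin n → ℝ)) (f : (Fin n → ℝ) → ℝ),
      K.Nonempty ∧ IsCompact K ∧ Convex ℝ K ∧ ContinuousOn f K ∧ diffBound 2 K f 1 ∧
      ∀ (c : ℝ) (a : Fin n → ℝ), ∃ x ∈ K,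
        (1 / 2) * Real.logb 2 ((n / 2 : ℕ) + 1) ≤ |f x - (c + ∑ i, a i * x i)| := by
  obtain ⟨K, f, nonempty, compact, convex, continuous, bound, deviation⟩ :=
    whitney_lower_bound_dim_n_general (Fin n → ℝ)
  refine ⟨K, f, nonempty, compact, convex, continuous.continuousOn, bound, fun c a ↦ ?_⟩
  let φ : (Fin n → ℝ) →ᵃ[ℝ] ℝ :=
    AffineMap.const ℝ _ c + (Fintype.linearCombination ℝ a).toAffineMap
  have hφ (x : Fin n → ℝ) : φ x = c + ∑ i, a i * x i := by
    simp only [φ, AffineMap.coe_add, Pi.add_apply, AffineMap.const_apply,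
      LinearMap.coe_toAffineMap, Fintype.linearCombination_apply, smul_eq_mul, mul_comm]
  simpa only [Module.finrank_fin_fun, hφ] using deviation φ
end

section
/- Let X be a finite-dimensional real normed space with closed unit ball B_X. (i) If w ≥ 0 is such that every continuous f : B_X → ℝ with ω₂(f;B_X) ≤ 1 admits an affine function φ with sup_{x∈B_X}|f(x)−φ(x)| ≤ w, then every continuous 1-homogeneous f : X → ℝ with ω₂(f;B_X) ≤ 1 admits a linear functional x* on X with sup_{x∈B_X}|f(x)−x*(x)| ≤ w. (ii) Conversely, if v ≥ 0 is such that every continuous 1-homogeneous f : X → ℝ with ω₂(f;B_X) ≤ 1 admits a linear functional x* with sup_{x∈B_X}|f(x)−x*(x)| ≤ v, then every continuous f : B_X → ℝ with ω₂(f;B_X) ≤ 1 admits an affine function φ with sup_{x∈B_X}|f(x)−φ(x)| ≤ 4v + 3/2. (Proposition 2.2: v₂(X) ≤ w₂(X) ≤ 4v₂(X) + 3/2.) -/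
open Finset

/-!
For odd `f`, averaging an affine approximation over `x` and `-x` removes its constant term, which
gives the first inequality.

For the second one, `f` is within `1 / 2` of `f 0 + o`, where `o` is its odd part. Let `h` be the
`1`-homogeneous function with `h = o` on the unit sphere. As `h` is linear on the line through `x`,
reflecting the point `x / ‖x‖`, where `o - h` vanishes, in `x` bounds the error at `x` by `1 / 2`
plus half the error at the reflected point; hence `|o - h| ≤ 1`. A second difference of `h` can be
scaled so that one endpoint lies on the sphere, where `h = o`; replacing `o` by `h` at the other
endpoint and at the midpoint costs `1` and `2`, so `h / 4` has second differences at most `1`.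

Bounded second differences spread the boundedness of `f` from a neighbourhood of `0` to the whole
ball by doubling, which takes the place of compactness.
-/

section Differences

variable {E : Type*} [AddCommGroup E] [Module ℝ E] {m : ℕ} {K : Set E} {f g : E → ℝ} {c d : ℝ}

lemma diffBound_two_iff_midpoint (hK : Convex ℝ K) :
    diffBound 2 K f c ↔ ∀ a ∈ K, ∀ b ∈ K, |f a + f b - 2 * f (midpoint ℝ a b)| ≤ c := by
  have sum_eq (x h : E) :
      ∑ j ∈ range (2 + 1), (-1 : ℝ) ^ (2 - j) * ((2 : ℕ).choose j : ℝ) * f (x + (j : ℝ) • h) =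
        f x + f (x + (2 : ℝ) • h) - 2 * f (x + h) := by
    simp only [sum_range_succ, sum_range_zero]
    norm_num
    ring
  constructor
  · intro hf a ha b hb
    have mid_eq : a + (2⁻¹ : ℝ) • (b - a) = midpoint ℝ a b := by
      rw [midpoint_eq_smul_add, invOf_eq_inv]
      module
    have end_eq : a + (2 : ℝ) • (2⁻¹ : ℝ) • (b - a) = b := by module
    have h := hf a ((2⁻¹ : ℝ) • (b - a)) fun j hj ↦ by
      interval_cases j
      · simpa using ha
      · simpa [mid_eq] using hK.midpoint_mem ha hb
      · simpa [end_eq] using hb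
    rwa [sum_eq, mid_eq, end_eq] at h
  · intro hf x h hx
    have mid_eq : midpoint ℝ x (x + (2 : ℝ) • h) = x + h := by
      rw [midpoint_eq_smul_add, invOf_eq_inv]
      module
    have second_difference := hf x (by simpa using hx 0 zero_le_two) (x + (2 : ℝ) • h)
      (by simpa using hx 2 le_rfl)
    rwa [mid_eq, ← sum_eq] at second_difference

lemma diffBound.sub (hf : diffBound m K f c) (hg : diffBound m K g d) :
    diffBound m K (fun x ↦ f x - g x) (c + d) := by
  intro x h hx
  simp only [mul_sub, sum_sub_distrib]
  exact (abs_sub _ _).trans (add_le_add (hf x h hx) (hg x h hx))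

lemma diffBound.const_mul (hf : diffBound m K f c) (r : ℝ) :
    diffBound m K (fun x ↦ r * f x) (|r| * c) := by
  intro x h hx
  simp only [mul_left_comm _ r, ← mul_sum, abs_mul]
  exact mul_le_mul_of_nonneg_left (hf x h hx) (abs_nonneg r)

lemma diffBound.comp_neg (hf : diffBound m K f c) (hK : ∀ x ∈ K, -x ∈ K) :
    diffBound m K (fun x ↦ f (-x)) c := by
  intro x h hx
  have neg_eq (j : ℕ) : -(x + (j : ℝ) • h) = -x + (j : ℝ) • -h := by module
  simp only [neg_eq]
  exact hf (-x) (-h) fun j hj ↦ neg_eq j ▸ hK _ (hx j hj)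

lemma two_inv_pow_mem_Icc (n : ℕ) : (2⁻¹ : ℝ) ^ n ∈ Set.Icc 0 1 :=
  ⟨by positivity, pow_le_one₀ (by norm_num) (by norm_num)⟩

lemma diffBound.abs_sub_map_zero_le (hf : diffBound 2 K f c) (hK : Convex ℝ K) (h0 : 0 ∈ K) (n : ℕ)
    {x : E} (hx : x ∈ K) :
    |f x - f 0| ≤ 2 ^ n * (|f ((2⁻¹ : ℝ) ^ n • x) - f 0| + c) - c := by
  induction n with
  | zero => simp
  | succ n ih =>
    set y := (2⁻¹ : ℝ) ^ n • x
    have hy : y ∈ K := hK.smul_mem_of_zero_mem h0 hx (two_inv_pow_mem_Icc n)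
    have mid_eq : midpoint ℝ y 0 = (2⁻¹ : ℝ) ^ (n + 1) • x := by
      rw [midpoint_eq_smul_add, invOf_eq_inv, add_zero, smul_smul, pow_succ']
    have halving : |f y - f 0| ≤ 2 * |f ((2⁻¹ : ℝ) ^ (n + 1) • x) - f 0| + c := by
      have h := (diffBound_two_iff_midpoint hK).1 hf y hy 0 h0
      rw [mid_eq] at h
      grind
    calc |f x - f 0| ≤ 2 ^ n * (|f y - f 0| + c) - c := ih
      _ ≤ 2 ^ n * (2 * |f ((2⁻¹ : ℝ) ^ (n + 1) • x) - f 0| + c + c) - c := by gcongr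
      _ = 2 ^ (n + 1) * (|f ((2⁻¹ : ℝ) ^ (n + 1) • x) - f 0| + c) - c := by ring

end Differences

lemma diffBound.exists_abs_le {X : Type*} [SeminormedAddCommGroup X] [NormedSpace ℝ X] {K : Set X}
    {f : X → ℝ} {c : ℝ} (hf : diffBound 2 K f c) (hK : Convex ℝ K) (hKb : Bornology.IsBounded K)
    (h0 : 0 ∈ K) (hf0 : ContinuousWithinAt f K 0) : ∃ C, ∀ x ∈ K, |f x| ≤ C := by
  obtain ⟨δ, hδ, hfδ⟩ := Metric.continuousWithinAt_iff.1 hf0 1 one_pos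
  obtain ⟨R, hR⟩ := hKb.exists_norm_le
  obtain ⟨n, hn⟩ : ∃ n : ℕ, (2⁻¹ : ℝ) ^ n * R < δ := by
    have h : Filter.Tendsto (fun n : ℕ ↦ (2⁻¹ : ℝ) ^ n * R) .atTop (nhds 0) := by
      simpa using (tendsto_pow_atTop_nhds_zero_of_lt_one (r := (2⁻¹ : ℝ)) (by norm_num)
        (by norm_num)).mul_const R
    exact (h.eventually_lt_const hδ).exists
  refine ⟨2 ^ n * (1 + c) - c + |f 0|, fun x hx ↦ ?_⟩
  have near_zero : |f ((2⁻¹ : ℝ) ^ n • x) - f 0| ≤ 1 := by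
    refine (hfδ (hK.smul_mem_of_zero_mem h0 hx (two_inv_pow_mem_Icc n)) ?_).le
    rw [dist_zero_right, norm_smul, norm_pow, norm_inv, Real.norm_two]
    exact (mul_le_mul_of_nonneg_left (hR x hx) (by positivity)).trans_lt hn
  calc |f x| ≤ |f x - f 0| + |f 0| := by simpa using abs_add_le (f x - f 0) (f 0)
    _ ≤ 2 ^ n * (|f ((2⁻¹ : ℝ) ^ n • x) - f 0| + c) - c + |f 0| := by
      gcongr
      exact hf.abs_sub_map_zero_le hK h0 n hx
    _ ≤ 2 ^ n * (1 + c) - c + |f 0| := by gcongr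

section OddPart

/-- The odd part of `f`, which carries the linear part of an affine approximation of `f` on a
symmetric set. -/
noncomputable def oddPart {E : Type*} [Neg E] (f : E → ℝ) (x : E) : ℝ := 2⁻¹ * (f x - f (-x))

lemma odd_oddPart {E : Type*} [InvolutiveNeg E] (f : E → ℝ) : (oddPart f).Odd := by
  intro x
  simp only [oddPart, neg_neg]
  ring

lemma continuousOn_oddPart {E : Type*} [TopologicalSpace E] [Neg E] [ContinuousNeg E] {K : Set E}
    {f : E → ℝ} (hf : ContinuousOn f K) (hK : ∀ x ∈ K, -x ∈ K) : ContinuousOn (oddPart f) K :=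
  (hf.sub (hf.comp continuous_neg.continuousOn hK)).const_mul _

variable {E : Type*} [AddCommGroup E] [Module ℝ E] {m : ℕ} {K : Set E} {f : E → ℝ} {c : ℝ}

lemma diffBound_oddPart (hf : diffBound m K f c) (hK : ∀ x ∈ K, -x ∈ K) :
    diffBound m K (oddPart f) c := by
  have bound_eq : |(2⁻¹ : ℝ)| * (c + c) = c := by
    rw [abs_of_pos (by norm_num)]
    ring
  exact bound_eq ▸ (hf.sub (hf.comp_neg hK)).const_mul 2⁻¹

lemma diffBound.abs_sub_oddPart_le (hf : diffBound 2 K f c) (hK : Convex ℝ K)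
    (hneg : ∀ x ∈ K, -x ∈ K) {x : E} (hx : x ∈ K) : |f x - (f 0 + oddPart f x)| ≤ c / 2 := by
  have h := (diffBound_two_iff_midpoint hK).1 hf x hx (-x) (hneg x hx)
  rw [midpoint_self_neg] at h
  unfold oddPart
  grind

lemma abs_sub_linear_le_of_odd {w : ℝ} {g : E →ₗ[ℝ] ℝ} (hf : f.Odd) (hK : ∀ x ∈ K, -x ∈ K)
    (hfg : ∀ x ∈ K, |f x - (c + g x)| ≤ w) {x : E} (hx : x ∈ K) : |f x - g x| ≤ w := by
  have hpos := hfg x hx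
  have hneg := hfg (-x) (hK x hx)
  rw [hf, map_neg] at hneg
  grind

end OddPart

section Homogenization

variable {X : Type*} [SeminormedAddCommGroup X] [NormedSpace ℝ X] {f : X → ℝ}

/-- The positively homogeneous extension of the restriction of `f` to the unit sphere; it is
`1`-homogeneous when `f` is odd. As `0⁻¹ = 0`, it vanishes at every vector of norm zero. -/
noncomputable def homogenization (f : X → ℝ) (x : X) : ℝ := ‖x‖ * f (‖x‖⁻¹ • x)

lemma homogenization_of_norm_eq_zero {x : X} (hx : ‖x‖ = 0) : homogenization f x = 0 := by
  simp [homogenization, hx]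

lemma homogenization_of_norm_eq_one {x : X} (hx : ‖x‖ = 1) : homogenization f x = f x := by
  simp [homogenization, hx]

lemma homogenization_smul_of_nonneg {r : ℝ} (hr : 0 ≤ r) (x : X) :
    homogenization f (r • x) = r * homogenization f x := by
  rcases hr.eq_or_lt' with rfl | hr
  · simp [homogenization]
  · have normalize : ‖r • x‖⁻¹ • r • x = ‖x‖⁻¹ • x := by
      rw [norm_smul_of_nonneg hr.le, smul_smul]
      congr 1
      field_simp
    rw [homogenization, homogenization, normalize, norm_smul_of_nonneg hr.le, mul_assoc]

lemma odd_homogenization (hf : f.Odd) : (homogenization f).Odd := by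
  intro x
  rw [homogenization, homogenization, norm_neg, smul_neg, hf, mul_neg]

lemma homogenization_smul (hf : f.Odd) (r : ℝ) (x : X) :
    homogenization f (r • x) = r * homogenization f x := by
  rcases le_total 0 r with hr | hr
  · exact homogenization_smul_of_nonneg hr x
  · rw [← neg_neg (r • x), ← neg_smul, odd_homogenization hf,
      homogenization_smul_of_nonneg (neg_nonneg.2 hr), neg_mul, neg_neg]

lemma norm_inv_norm_smul_of_norm_ne_zero {x : X} (hx : ‖x‖ ≠ 0) : ‖‖x‖⁻¹ • x‖ = 1 := by
  rw [norm_smul, norm_inv, norm_norm, inv_mul_cancel₀ hx]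

lemma abs_homogenization_le {C : ℝ} (hC : ∀ u ∈ Metric.sphere (0 : X) 1, |f u| ≤ C) (x : X) :
    |homogenization f x| ≤ ‖x‖ * C := by
  by_cases hx : ‖x‖ = 0
  · simp [homogenization, hx]
  · rw [homogenization, abs_mul, abs_norm]
    gcongr
    exact hC _ (mem_sphere_zero_iff_norm.2 (norm_inv_norm_smul_of_norm_ne_zero hx))

lemma continuous_homogenization {C : ℝ} (hf : ContinuousOn f (Metric.sphere 0 1))
    (hC : ∀ u ∈ Metric.sphere (0 : X) 1, |f u| ≤ C) : Continuous (homogenization f) := by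
  refine continuous_iff_continuousAt.2 fun x ↦ ?_
  by_cases hx : ‖x‖ = 0
  · rw [ContinuousAt, homogenization_of_norm_eq_zero hx]
    refine squeeze_zero_norm (abs_homogenization_le hC) ?_
    simpa [hx] using (by fun_prop : Continuous fun y : X ↦ ‖y‖ * C).tendsto x
  · have h : ContinuousOn (homogenization f) {y | ‖y‖ ≠ 0} := by
      refine continuous_norm.continuousOn.mul (hf.comp ?_ fun y hy ↦ ?_)
      · exact (continuous_norm.continuousOn.inv₀ fun _ ↦ id).smul continuousOn_id
      · exact mem_sphere_zero_iff_norm.2 (norm_inv_norm_smul_of_norm_ne_zero hy)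
    exact h.continuousAt ((isOpen_ne_fun continuous_norm continuous_const).mem_nhds hx)

end Homogenization

lemma le_of_forall_exists_le_half_add {α : Type*} {s : Set α} {φ : α → ℝ} {c : ℝ}
    (hφ : BddAbove (φ '' s)) (h : ∀ x ∈ s, ∃ y ∈ s, φ x ≤ (c + φ y) / 2) {x : α} (hx : x ∈ s) :
    φ x ≤ c := by
  have le_sup {y : α} (hy : y ∈ s) : φ y ≤ sSup (φ '' s) :=
    le_csSup hφ (Set.mem_image_of_mem φ hy)
  have sup_le : sSup (φ '' s) ≤ (c + sSup (φ '' s)) / 2 := by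
    refine csSup_le ⟨φ x, Set.mem_image_of_mem φ hx⟩ ?_
    rintro _ ⟨y, hy, rfl⟩
    obtain ⟨z, hz, hyz⟩ := h y hy
    linarith [le_sup hz]
  linarith [le_sup hx]

section HomogenizationOnBall

open Metric

variable {X : Type*} [SeminormedAddCommGroup X] [NormedSpace ℝ X] {f : X → ℝ} {c C : ℝ}

lemma norm_two_sub_inv_norm_smul_le_one {x : X} (hx : ‖x‖ ≤ 1) : ‖(2 - ‖x‖⁻¹) • x‖ ≤ 1 := by
  rcases (norm_nonneg x).eq_or_lt' with h | h
  · simp [norm_smul, h]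
  · rw [norm_smul, Real.norm_eq_abs, ← abs_norm x, ← abs_mul, abs_norm, sub_mul,
      inv_mul_cancel₀ h.ne', abs_le]
    constructor <;> linarith

lemma diffBound.exists_abs_sub_homogenization_le (hf : diffBound 2 (closedBall 0 1) f c)
    (hodd : f.Odd) {x : X} (hx : x ∈ closedBall 0 1) :
    ∃ y ∈ closedBall (0 : X) 1,
      |f x - homogenization f x| ≤ (c + |f y - homogenization f y|) / 2 := by
  rw [mem_closedBall_zero_iff] at hx
  set u := ‖x‖⁻¹ • x
  set y := (2 - ‖x‖⁻¹) • x
  have hy : y ∈ closedBall (0 : X) 1 :=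
    mem_closedBall_zero_iff.2 (norm_two_sub_inv_norm_smul_le_one hx)
  have hu : u ∈ closedBall (0 : X) 1 := inv_norm_smul_mem_unitClosedBall x
  have mid_eq : midpoint ℝ u y = x := by
    rw [midpoint_eq_smul_add, invOf_eq_inv]
    module
  have fu : f u = homogenization f u := by
    by_cases h : ‖x‖ = 0
    · simp [u, h, homogenization, hodd.map_zero]
    · exact (homogenization_of_norm_eq_one (norm_inv_norm_smul_of_norm_ne_zero h)).symm
  have linear_on_line : homogenization f u + homogenization f y = 2 * homogenization f x := by
    rw [homogenization_smul hodd, homogenization_smul hodd]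
    ring
  have second_difference := (diffBound_two_iff_midpoint (convex_closedBall 0 1)).1 hf u hu y hy
  rw [mid_eq, fu] at second_difference
  exact ⟨y, hy, by grind⟩

lemma diffBound.abs_sub_homogenization_le (hf : diffBound 2 (closedBall 0 1) f c) (hodd : f.Odd)
    (hC : ∀ x ∈ closedBall (0 : X) 1, |f x| ≤ C) {x : X} (hx : x ∈ closedBall 0 1) :
    |f x - homogenization f x| ≤ c := by
  refine le_of_forall_exists_le_half_add (s := closedBall (0 : X) 1)
    (φ := fun x ↦ |f x - homogenization f x|) ⟨C + C, ?_⟩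
    (fun _ hy ↦ hf.exists_abs_sub_homogenization_le hodd hy) hx
  rintro _ ⟨y, hy, rfl⟩
  have C_nonneg : 0 ≤ C := (abs_nonneg _).trans (hC y hy)
  have h := abs_homogenization_le (fun u hu ↦ hC u (sphere_subset_closedBall hu)) y
  exact (abs_sub _ _).trans (add_le_add (hC y hy)
    (h.trans (mul_le_of_le_one_left C_nonneg (mem_closedBall_zero_iff.1 hy))))

lemma diffBound.abs_homogenization_add_sub_le_of_norm_eq_one
    (hf : diffBound 2 (closedBall 0 1) f c) (hodd : f.Odd)
    (hC : ∀ x ∈ closedBall (0 : X) 1, |f x| ≤ C) {a b : X} (ha : ‖a‖ = 1) (hb : ‖b‖ ≤ 1) :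
    |homogenization f a + homogenization f b - 2 * homogenization f (midpoint ℝ a b)| ≤ 4 * c := by
  have ha' : a ∈ closedBall (0 : X) 1 := mem_closedBall_zero_iff.2 ha.le
  have hb' : b ∈ closedBall (0 : X) 1 := mem_closedBall_zero_iff.2 hb
  have hball : Convex ℝ (closedBall (0 : X) 1) := convex_closedBall 0 1
  have second_difference := (diffBound_two_iff_midpoint hball).1 hf a ha' b hb'
  have error_b := hf.abs_sub_homogenization_le hodd hC hb'
  have error_mid := hf.abs_sub_homogenization_le hodd hC (hball.midpoint_mem ha' hb')
  rw [homogenization_of_norm_eq_one ha]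
  grind

lemma diffBound.abs_homogenization_add_sub_le (hf : diffBound 2 (closedBall 0 1) f c)
    (hodd : f.Odd) (hC : ∀ x ∈ closedBall (0 : X) 1, |f x| ≤ C) {a b : X} (hab : ‖b‖ ≤ ‖a‖) :
    |homogenization f a + homogenization f b - 2 * homogenization f (midpoint ℝ a b)| ≤
      ‖a‖ * (4 * c) := by
  rcases (norm_nonneg a).eq_or_lt' with ha | ha
  · have hb : ‖b‖ = 0 := le_antisymm (hab.trans_eq ha) (norm_nonneg b)
    have hmid : midpoint ℝ a b ∈ closedBall (0 : X) ‖a‖ :=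
      (convex_closedBall 0 _).midpoint_mem (by simp) (by simpa using hab)
    rw [ha, mem_closedBall_zero_iff, (norm_nonneg _).ge_iff_eq'] at hmid
    simp [homogenization_of_norm_eq_zero, ha, hb, hmid]
  · have h := hf.abs_homogenization_add_sub_le_of_norm_eq_one hodd hC
      (a := ‖a‖⁻¹ • a) (b := ‖a‖⁻¹ • b) (norm_inv_norm_smul_of_norm_ne_zero ha.ne')
      (by rwa [norm_smul, norm_inv, norm_norm, inv_mul_le_one₀ ha])
    have mid_eq : midpoint ℝ (‖a‖⁻¹ • a) (‖a‖⁻¹ • b) = ‖a‖⁻¹ • midpoint ℝ a b := by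
      rw [midpoint_eq_smul_add, midpoint_eq_smul_add, ← smul_add, smul_comm]
    rwa [mid_eq, homogenization_smul hodd, homogenization_smul hodd, homogenization_smul hodd,
      mul_left_comm, ← mul_add, ← mul_sub, abs_mul, abs_inv, abs_norm, inv_mul_le_iff₀ ha] at h

lemma diffBound_homogenization (hf : diffBound 2 (closedBall 0 1) f c) (hodd : f.Odd)
    (hC : ∀ x ∈ closedBall (0 : X) 1, |f x| ≤ C) :
    diffBound 2 (closedBall 0 1) (homogenization f) (4 * c) := by
  have c_nonneg : 0 ≤ c :=
    (abs_nonneg _).trans (hf.abs_sub_homogenization_le hodd hC (mem_closedBall_self zero_le_one))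
  refine (diffBound_two_iff_midpoint (convex_closedBall 0 1)).2 fun a ha b hb ↦ ?_
  rw [mem_closedBall_zero_iff] at ha hb
  rcases le_total ‖b‖ ‖a‖ with hab | hab
  · exact (hf.abs_homogenization_add_sub_le hodd hC hab).trans
      (mul_le_of_le_one_left (by positivity) ha)
  · rw [add_comm, midpoint_comm]
    exact (hf.abs_homogenization_add_sub_le hodd hC hab).trans
      (mul_le_of_le_one_left (by positivity) hb)

lemma diffBound.exists_homogeneous_abs_sub_le (hf : diffBound 2 (closedBall 0 1) f c)
    (hfc : ContinuousOn f (closedBall 0 1)) :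
    ∃ h : X → ℝ, Continuous h ∧ (∀ (a : ℝ) (x : X), h (a • x) = a * h x) ∧
      diffBound 2 (closedBall 0 1) h (4 * c) ∧
      ∀ x ∈ closedBall (0 : X) 1, |f x - (f 0 + h x)| ≤ 3 / 2 * c := by
  have ball_neg (x : X) (hx : x ∈ closedBall 0 1) : -x ∈ closedBall 0 1 := by simpa using hx
  have ball_convex : Convex ℝ (closedBall (0 : X) 1) := convex_closedBall 0 1
  have zero_mem : (0 : X) ∈ closedBall 0 1 := mem_closedBall_self zero_le_one
  have hodd := odd_oddPart f
  have hcont := continuousOn_oddPart hfc ball_neg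
  have hdiff := diffBound_oddPart hf ball_neg
  obtain ⟨C, hC⟩ :=
    hdiff.exists_abs_le ball_convex isBounded_closedBall zero_mem (hcont 0 zero_mem)
  refine ⟨homogenization (oddPart f), ?_, homogenization_smul hodd,
    diffBound_homogenization hdiff hodd hC, fun x hx ↦ ?_⟩
  · exact continuous_homogenization (hcont.mono sphere_subset_closedBall)
      fun u hu ↦ hC u (sphere_subset_closedBall hu)
  · have even_error := hf.abs_sub_oddPart_le ball_convex ball_neg hx
    have homogenization_error := hdiff.abs_sub_homogenization_le hodd hC hx
    grind

end HomogenizationOnBall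

theorem homogeneous_whitney_comparison_general (X : Type*) [SeminormedAddCommGroup X]
    [NormedSpace ℝ X] :
    (∀ w : ℝ,
      (∀ f : X → ℝ, ContinuousOn f (Metric.closedBall 0 1) →
        diffBound 2 (Metric.closedBall 0 1) f 1 →
        ∃ (c : ℝ) (g : X →ₗ[ℝ] ℝ), ∀ x ∈ Metric.closedBall (0 : X) 1, |f x - (c + g x)| ≤ w) →
      (∀ f : X → ℝ, Continuous f → (∀ (a : ℝ) (x : X), f (a • x) = a * f x) →
        diffBound 2 (Metric.closedBall 0 1) f 1 →
        ∃ g : X →ₗ[ℝ] ℝ, ∀ x ∈ Metric.closedBall (0 : X) 1, |f x - g x| ≤ w)) ∧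
    (∀ v : ℝ,
      (∀ f : X → ℝ, Continuous f → (∀ (a : ℝ) (x : X), f (a • x) = a * f x) →
        diffBound 2 (Metric.closedBall 0 1) f 1 →
        ∃ g : X →ₗ[ℝ] ℝ, ∀ x ∈ Metric.closedBall (0 : X) 1, |f x - g x| ≤ v) →
      (∀ f : X → ℝ, ContinuousOn f (Metric.closedBall 0 1) →
        diffBound 2 (Metric.closedBall 0 1) f 1 →
        ∃ (c : ℝ) (g : X →ₗ[ℝ] ℝ), ∀ x ∈ Metric.closedBall (0 : X) 1,
          |f x - (c + g x)| ≤ 4 * v + 3 / 2)) := by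
  refine ⟨fun w affine f hf hhom hdiff ↦ ?_, fun v linear f hf hdiff ↦ ?_⟩
  · obtain ⟨c, g, hg⟩ := affine f hf.continuousOn hdiff
    have hodd : f.Odd := fun x ↦ by simpa using hhom (-1) x
    exact ⟨g, fun x hx ↦ abs_sub_linear_le_of_odd hodd (by simp) hg hx⟩
  · obtain ⟨h, hcont, hhom, hhdiff, hfh⟩ := hdiff.exists_homogeneous_abs_sub_le hf
    obtain ⟨g, hg⟩ := linear (fun x ↦ 4⁻¹ * h x) (hcont.const_mul _)
      (fun a x ↦ by rw [hhom, mul_left_comm]) (by simpa using hhdiff.const_mul 4⁻¹)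
    refine ⟨f 0, (4 : ℝ) • g, fun x hx ↦ ?_⟩
    have homogeneous_error := hfh x hx
    have linear_error := hg x hx
    rw [LinearMap.smul_apply, smul_eq_mul]
    grind

/-- Proposition 2.2: `v₂(X) ≤ w₂(X) ≤ 4 v₂(X) + 3/2`. -/
theorem homogeneous_whitney_comparison (X : Type*) [NormedAddCommGroup X] [NormedSpace ℝ X]
    [FiniteDimensional ℝ X] :
    -- (i) if `w₂(X) ≤ w` then `v₂(X) ≤ w`
    ((∀ w : ℝ, 0 ≤ w →
      (∀ f : X → ℝ, ContinuousOn f (Metric.closedBall 0 1) →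
        diffBound 2 (Metric.closedBall 0 1) f 1 →
        ∃ (c : ℝ) (g : X →ₗ[ℝ] ℝ), ∀ x ∈ Metric.closedBall (0 : X) 1, |f x - (c + g x)| ≤ w) →
      (∀ f : X → ℝ, Continuous f → (∀ (a : ℝ) (x : X), f (a • x) = a * f x) →
        diffBound 2 (Metric.closedBall 0 1) f 1 →
        ∃ g : X →ₗ[ℝ] ℝ, ∀ x ∈ Metric.closedBall (0 : X) 1, |f x - g x| ≤ w)) ∧
    -- (ii) if `v₂(X) ≤ v` then `w₂(X) ≤ 4v + 3/2`
    (∀ v : ℝ, 0 ≤ v →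
      (∀ f : X → ℝ, Continuous f → (∀ (a : ℝ) (x : X), f (a • x) = a * f x) →
        diffBound 2 (Metric.closedBall 0 1) f 1 →
        ∃ g : X →ₗ[ℝ] ℝ, ∀ x ∈ Metric.closedBall (0 : X) 1, |f x - g x| ≤ v) →
      (∀ f : X → ℝ, ContinuousOn f (Metric.closedBall 0 1) →
        diffBound 2 (Metric.closedBall 0 1) f 1 →
        ∃ (c : ℝ) (g : X →ₗ[ℝ] ℝ), ∀ x ∈ Metric.closedBall (0 : X) 1,
          |f x - (c + g x)| ≤ 4 * v + 3 / 2))) :=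
  ⟨fun w _ ↦ (homogeneous_whitney_comparison_general X).1 w,
    fun v _ ↦ (homogeneous_whitney_comparison_general X).2 v⟩
end

section
/- Let K be a nonempty compact subset of ℝⁿ and f : K → ℝ continuous. Define E₂(f;K) := inf over affine functions φ on ℝⁿ of sup_{x∈K}|f(x)−φ(x)|. Then E₂(f;K) = (1/2)·sup{∑_{i=1}^l a_i f(x_i) − ∑_{j=1}^m b_j f(y_j)}, where the supremum is taken over all pairs of positive integers l, m with l + m ≤ n + 2, all points x₁,…,x_l, y₁,…,y_m ∈ K, and all nonnegative reals a₁,…,a_l, b₁,…,b_m with ∑_{i=1}^l a_i = ∑_{j=1}^m b_j = 1 and ∑_{i=1}^l a_i x_i = ∑_{j=1}^m b_j y_j. (Proposition 3.2.) -/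
open Finset

/-!
A relation `∑ μ i • (1, x i) = 0` between finitely many points of `K` splits by signs into two
convex combinations with the same barycentre, each scaled by half the total mass of `μ`.
So if every admissible value is at most `S`, then `μ ↦ ∑ μ i * f (x i)` is bounded by `S / 2` times
the `ℓ¹` norm on the relations. Hahn–Banach extends it to all finitely supported `μ` with the same
bound; what the extension misses vanishes on the relations, hence is an affine function of the
points, within `S / 2` of `f`. Carathéodory's argument, run so that the value of the objective never
drops, keeps the number of points within `dim + 2`.
-/

section Caratheodory

variable {𝕜 ι V : Type*} [Field 𝕜] [LinearOrder 𝕜] [IsStrictOrderedRing 𝕜]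

lemma exists_nonneg_add_mul_and_eq_zero {s : Finset ι} {w d : ι → 𝕜} (hw : ∀ i ∈ s, 0 ≤ w i)
    (hd : ∃ i ∈ s, d i < 0) :
    ∃ τ, 0 ≤ τ ∧ (∀ i ∈ s, 0 ≤ w i + τ * d i) ∧ ∃ i ∈ s, w i + τ * d i = 0 := by
  obtain ⟨j, hj, hmin⟩ := exists_min_image (s.filter (d · < 0)) (fun i ↦ w i / -d i)
    (filter_nonempty_iff.2 hd)
  obtain ⟨hjs, hdj⟩ := mem_filter.1 hj
  have hτ : 0 ≤ w j / -d j := div_nonneg (hw j hjs) (neg_nonneg.2 hdj.le)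
  refine ⟨w j / -d j, hτ, fun i hi ↦ ?_, j, hjs, by field_simp [hdj.ne]; ring⟩
  rcases lt_or_ge (d i) 0 with hdi | hdi
  · have hle := (le_div_iff₀ (neg_pos.2 hdi)).1 (hmin i (mem_filter.2 ⟨hi, hdi⟩))
    linarith
  · exact add_nonneg (hw i hi) (mul_nonneg hτ hdi)

variable [AddCommGroup V] [Module 𝕜 V]

lemma exists_sum_smul_eq_zero_and_neg {u : ι → V} {s : Finset ι}
    (hu : ¬ LinearIndepOn 𝕜 u (s : Set ι)) {L : Module.Dual 𝕜 V} (hL : ∀ i ∈ s, 0 < L (u i))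
    (g : ι → 𝕜) :
    ∃ d : ι → 𝕜, ∑ i ∈ s, d i • u i = 0 ∧ 0 ≤ ∑ i ∈ s, d i * g i ∧ ∃ i ∈ s, d i < 0 := by
  obtain ⟨d, hdu, hdg, j, hj, hdj⟩ : ∃ d : ι → 𝕜, ∑ i ∈ s, d i • u i = 0 ∧
      0 ≤ ∑ i ∈ s, d i * g i ∧ ∃ i ∈ s, d i ≠ 0 := by
    rw [linearIndepOn_finset_iff] at hu
    push Not at hu
    obtain ⟨d, hdu, hd⟩ := hu
    rcases le_total 0 (∑ i ∈ s, d i * g i) with h | h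
    · exact ⟨d, hdu, h, hd⟩
    · exact ⟨-d, by simp [hdu], by simpa using h, by simpa using hd⟩
  refine ⟨d, hdu, hdg, ?_⟩
  by_contra! hd
  have hsum : ∑ i ∈ s, d i * L (u i) = 0 := by simpa using congrArg L hdu
  have hzero := (sum_eq_zero_iff_of_nonneg fun i hi ↦ mul_nonneg (hd i hi) (hL i hi).le).1 hsum j hj
  exact (mul_ne_zero hdj (hL j hj).ne') hzero

lemma exists_subset_linearIndepOn_sum_smul_eq {u : ι → V} {L : Module.Dual 𝕜 V} (g : ι → 𝕜)
    (s : Finset ι) (hL : ∀ i ∈ s, 0 < L (u i)) {w : ι → 𝕜} (hw : ∀ i ∈ s, 0 ≤ w i) :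
    ∃ t ⊆ s, LinearIndepOn 𝕜 u (t : Set ι) ∧ ∃ w' : ι → 𝕜, (∀ i ∈ t, 0 ≤ w' i) ∧
      ∑ i ∈ t, w' i • u i = ∑ i ∈ s, w i • u i ∧ ∑ i ∈ s, w i * g i ≤ ∑ i ∈ t, w' i * g i := by
  classical
  induction s using Finset.strongInduction generalizing w with
  | H s ih =>
  by_cases hu : LinearIndepOn 𝕜 u (s : Set ι)
  · exact ⟨s, Subset.rfl, hu, w, hw, rfl, le_rfl⟩
  obtain ⟨d, hdu, hdg, hd⟩ := exists_sum_smul_eq_zero_and_neg hu hL g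
  obtain ⟨τ, hτ, hnonneg, j, hj, hzero⟩ := exists_nonneg_add_mul_and_eq_zero hw hd
  obtain ⟨t, hts, ht, w', hw', hsum, hle⟩ := ih (s.erase j) (erase_ssubset hj)
    (fun i hi ↦ hL i (mem_of_mem_erase hi)) (fun i hi ↦ hnonneg i (mem_of_mem_erase hi))
  refine ⟨t, hts.trans (erase_subset j s), ht, w', hw', ?_, le_trans ?_ hle⟩
  · rw [hsum, sum_erase _ (by rw [hzero, zero_smul])]
    simp only [add_smul, mul_smul, sum_add_distrib, ← smul_sum, hdu, smul_zero, add_zero]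
  · rw [sum_erase _ (by rw [hzero, zero_mul])]
    simp only [add_mul, mul_assoc, sum_add_distrib, ← mul_sum]
    exact le_add_of_nonneg_right (mul_nonneg hτ hdg)

lemma exists_card_add_card_le_of_linearCombination_eq_zero [FiniteDimensional 𝕜 V] {u : ι → V}
    (f : ι → 𝕜) {μ : ι →₀ 𝕜} (hμ : Finsupp.linearCombination 𝕜 u μ = 0) :
    ∃ (A B : Finset ι) (a b : ι → 𝕜), #A + #B ≤ Module.finrank 𝕜 V + 1 ∧
      (∀ i ∈ A, 0 ≤ a i) ∧ (∀ i ∈ B, 0 ≤ b i) ∧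
      ∑ i ∈ A, a i + ∑ i ∈ B, b i = μ.sum (fun _ c ↦ |c|) ∧
      ∑ i ∈ A, a i • u i = ∑ i ∈ B, b i • u i ∧
      Finsupp.linearCombination 𝕜 f μ ≤ ∑ i ∈ A, a i * f i - ∑ i ∈ B, b i * f i := by
  -- The coordinate `1` makes the reduction preserve the total mass.
  let v : ι ⊕ ι → 𝕜 × V := Sum.elim (fun i ↦ (1, u i)) (fun i ↦ (1, -u i))
  have hv : ∀ i, 0 < LinearMap.fst 𝕜 𝕜 V (v i) :=
    Sum.forall.2 ⟨fun _ ↦ zero_lt_one, fun _ ↦ zero_lt_one⟩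
  obtain ⟨t, -, ht, w, hw, hsum, hle⟩ := exists_subset_linearIndepOn_sum_smul_eq
    (Sum.elim f (-f)) (μ.support.disjSum μ.support) (fun i _ ↦ hv i)
    (w := Sum.elim (fun i ↦ (μ i)⁺) (fun i ↦ (μ i)⁻))
    (Sum.forall.2 ⟨fun i _ ↦ posPart_nonneg (μ i), fun i _ ↦ negPart_nonneg (μ i)⟩)
  have hcard : #t ≤ Module.finrank 𝕜 V + 1 := by
    simpa [add_comm] using ht.fintype_card_le_finrank
  simp only [sum_sum_eq_sum_toLeft_add_sum_toRight t, sum_disjSum, Sum.elim_inl, Sum.elim_inr, v,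
    Prod.ext_iff, Prod.fst_add, Prod.snd_add, Prod.fst_sum, Prod.snd_sum, Prod.smul_fst,
    Prod.smul_snd, smul_eq_mul, mul_one, smul_neg, sum_neg_distrib, Pi.neg_apply, mul_neg,
    ← sub_eq_add_neg] at hsum hle
  simp only [← sum_add_distrib, ← sum_sub_distrib, ← sub_smul, ← sub_mul, posPart_add_negPart,
    posPart_sub_negPart] at hsum hle
  obtain ⟨hmass, hrel⟩ := hsum
  refine ⟨t.toLeft, t.toRight, fun i ↦ w (.inl i), fun i ↦ w (.inr i), ?_, ?_, ?_, ?_, ?_, ?_⟩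
  · rwa [card_toLeft_add_card_toRight]
  · exact fun i hi ↦ hw _ (mem_toLeft.1 hi)
  · exact fun i hi ↦ hw _ (mem_toRight.1 hi)
  · exact hmass
  · exact sub_eq_zero.1 (hrel.trans hμ)
  · exact hle

end Caratheodory

section HahnBanach

lemma sum_abs_add_le {ι G : Type*} [AddCommGroup G] [LinearOrder G] [IsOrderedAddMonoid G]
    (μ ν : ι →₀ G) :
    (μ + ν).sum (fun _ c ↦ |c|) ≤ μ.sum (fun _ c ↦ |c|) + ν.sum (fun _ c ↦ |c|) := by
  classical
  rw [Finsupp.sum_of_support_subset μ subset_union_left _ (by simp),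
    Finsupp.sum_of_support_subset ν subset_union_right _ (by simp),
    Finsupp.sum_of_support_subset (μ + ν) Finsupp.support_add _ (by simp), ← sum_add_distrib]
  exact sum_le_sum fun i _ ↦ abs_add_le (μ i) (ν i)

lemma sum_abs_smul {ι R : Type*} [Ring R] [LinearOrder R] [IsOrderedRing R] (c : R) (μ : ι →₀ R) :
    (c • μ).sum (fun _ c ↦ |c|) = |c| * μ.sum (fun _ c ↦ |c|) := by
  rw [Finsupp.sum_smul_index (by simp), Finsupp.mul_sum]
  simp only [abs_mul]

theorem exists_dual_forall_abs_sub_le {ι V : Type*} [AddCommGroup V] [Module ℝ V] {u : ι → V}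
    {f : ι → ℝ} {r : ℝ} (hr : 0 ≤ r)
    (hf : ∀ μ : ι →₀ ℝ, Finsupp.linearCombination ℝ u μ = 0 →
      Finsupp.linearCombination ℝ f μ ≤ r * μ.sum fun _ c ↦ |c|) :
    ∃ g : Module.Dual ℝ V, ∀ i, |f i - g (u i)| ≤ r := by
  let T := Finsupp.linearCombination ℝ u
  obtain ⟨F, hFker, hFle⟩ := exists_extension_of_le_sublinear
    ⟨T.ker, Finsupp.linearCombination ℝ f ∘ₗ T.ker.subtype⟩ (fun μ ↦ r * μ.sum fun _ c ↦ |c|)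
    (fun c hc μ ↦ by rw [sum_abs_smul, abs_of_pos hc, mul_left_comm])
    (fun μ ν ↦ by
      rw [← mul_add]
      exact mul_le_mul_of_nonneg_left (sum_abs_add_le μ ν) hr)
    (fun μ ↦ hf μ μ.2)
  have hmem : Finsupp.linearCombination ℝ f - F ∈ T.dualMap.range := by
    rw [LinearMap.range_dualMap_eq_dualAnnihilator_ker, Submodule.mem_dualAnnihilator]
    exact fun μ hμ ↦ sub_eq_zero.2 (hFker ⟨μ, hμ⟩).symm
  obtain ⟨g, hg⟩ := hmem
  refine ⟨g, fun i ↦ ?_⟩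
  have heval : g (u i) = f i - F (Finsupp.single i 1) := by
    simpa [T] using LinearMap.congr_fun hg (Finsupp.single i 1)
  rw [heval, sub_sub_cancel, abs_le']
  constructor
  · simpa using hFle (Finsupp.single i 1)
  · simpa [Finsupp.sum_neg_index] using hFle (-Finsupp.single i 1)

end HahnBanach

section AffineApproximation

variable {E : Type*} [AddCommGroup E] [Module ℝ E] {K : Set E} {f : E → ℝ}

/-- The uniform error bounds on `K` achieved by affine functions `x ↦ c + ℓ x` approximating `f`;
the infimum is the best approximation error `E₂(f; K)`. -/
def affineErrorBounds (K : Set E) (f : E → ℝ) : Set ℝ :=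
  {r | ∃ (c : ℝ) (ℓ : Module.Dual ℝ E), ∀ x ∈ K, |f x - (c + ℓ x)| ≤ r}

/-- The differences `∑ a i * f (x i) - ∑ b j * f (y j)` of averages of `f` over two convex
combinations of points of `K` with a common barycentre and at most `N` points in total, the
competitors of the dual problem. The points need not be distinct. -/
def barycentricGaps (N : ℕ) (K : Set E) (f : E → ℝ) : Set ℝ :=
  {v | ∃ (l m : ℕ) (x : Fin l → E) (y : Fin m → E) (a : Fin l → ℝ) (b : Fin m → ℝ),
    1 ≤ l ∧ 1 ≤ m ∧ l + m ≤ N ∧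
    (∀ i, x i ∈ K) ∧ (∀ j, y j ∈ K) ∧ (∀ i, 0 ≤ a i) ∧ (∀ j, 0 ≤ b j) ∧
    (∑ i, a i) = 1 ∧ (∑ j, b j) = 1 ∧ (∑ i, a i • x i) = (∑ j, b j • y j) ∧
    v = (∑ i, a i * f (x i)) - (∑ j, b j * f (y j))}

lemma affineErrorBounds_pi {ι : Type*} [Fintype ι] (K : Set (ι → ℝ)) (f : (ι → ℝ) → ℝ) :
    affineErrorBounds K f =
      {r | ∃ (c : ℝ) (a : ι → ℝ), ∀ x ∈ K, |f x - (c + ∑ i, a i * x i)| ≤ r} := by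
  classical
  simp only [affineErrorBounds, (dotProductEquiv ℝ ι).surjective.exists]
  rfl

lemma zero_mem_barycentricGaps {N : ℕ} (hN : 2 ≤ N) (hK : K.Nonempty) :
    0 ∈ barycentricGaps N K f := by
  obtain ⟨p, hp⟩ := hK
  exact ⟨1, 1, fun _ ↦ p, fun _ ↦ p, 1, 1, le_rfl, le_rfl, hN, by simp [hp]⟩

lemma le_two_mul_of_mem_barycentricGaps {N : ℕ} {v r : ℝ} (hv : v ∈ barycentricGaps N K f)
    (hr : r ∈ affineErrorBounds K f) : v ≤ 2 * r := by
  obtain ⟨l, m, x, y, a, b, -, -, -, hx, hy, ha, hb, hsa, hsb, hxy, rfl⟩ := hv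
  obtain ⟨c, ℓ, hr⟩ := hr
  have hle : ∑ i, a i * f (x i) ≤ ∑ i, a i * (r + c + ℓ (x i)) := by
    gcongr with i
    · exact ha i
    · linarith [(abs_le.1 (hr _ (hx i))).2]
  have hge : ∑ j, b j * (-r + c + ℓ (y j)) ≤ ∑ j, b j * f (y j) := by
    gcongr with j
    · exact hb j
    · linarith [(abs_le.1 (hr _ (hy j))).1]
  have hℓ : ∑ i, a i * ℓ (x i) = ∑ j, b j * ℓ (y j) := by simpa using congrArg ℓ hxy
  simp only [mul_add, sum_add_distrib, ← sum_mul, hsa, hsb] at hle hge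
  linarith

lemma sum_fin_card_equivFin_symm {ι M : Type*} [AddCommMonoid M] (s : Finset ι) (F : ι → M) :
    ∑ k, F (s.equivFin.symm k) = ∑ i ∈ s, F i := by
  rw [Equiv.sum_comp s.equivFin.symm fun i : s ↦ F i, sum_coe_sort]

lemma div_mem_barycentricGaps {ι : Type*} {x : ι → E} (hx : ∀ i, x i ∈ K) {A B : Finset ι}
    {N : ℕ} (hN : #A + #B ≤ N) {a b : ι → ℝ} (ha : ∀ i ∈ A, 0 ≤ a i) (hb : ∀ i ∈ B, 0 ≤ b i)
    {M : ℝ} (hM : 0 < M) (hsa : ∑ i ∈ A, a i = M) (hsb : ∑ i ∈ B, b i = M)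
    (hab : ∑ i ∈ A, a i • x i = ∑ i ∈ B, b i • x i) :
    (∑ i ∈ A, a i * f (x i) - ∑ i ∈ B, b i * f (x i)) / M ∈ barycentricGaps N K f := by
  have hcard {s : Finset ι} {w : ι → ℝ} (hw : ∑ i ∈ s, w i = M) : 1 ≤ #s :=
    card_pos.2 (nonempty_of_sum_ne_zero (hw.trans_ne hM.ne'))
  have hweight {s : Finset ι} {w : ι → ℝ} (hw : ∑ i ∈ s, w i = M) :
      ∑ k, w (s.equivFin.symm k) / M = 1 := by
    rw [← sum_div, sum_fin_card_equivFin_symm, hw, div_self hM.ne']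
  refine ⟨#A, #B, fun k ↦ x (A.equivFin.symm k), fun k ↦ x (B.equivFin.symm k),
    fun k ↦ a (A.equivFin.symm k) / M, fun k ↦ b (B.equivFin.symm k) / M,
    hcard hsa, hcard hsb, hN, fun _ ↦ hx _, fun _ ↦ hx _,
    fun k ↦ div_nonneg (ha _ (A.equivFin.symm k).2) hM.le,
    fun k ↦ div_nonneg (hb _ (B.equivFin.symm k).2) hM.le, hweight hsa, hweight hsb, ?_, ?_⟩
  · rw [sum_fin_card_equivFin_symm A fun i ↦ (a i / M) • x i,
      sum_fin_card_equivFin_symm B fun i ↦ (b i / M) • x i]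
    simp only [div_eq_inv_mul, mul_smul, ← smul_sum, hab]
  · rw [sum_fin_card_equivFin_symm A fun i ↦ a i / M * f (x i),
      sum_fin_card_equivFin_symm B fun i ↦ b i / M * f (x i)]
    simp only [div_mul_eq_mul_div, ← sum_div, sub_div]

variable [FiniteDimensional ℝ E]

lemma linearCombination_le_of_barycentricGaps_le {S : ℝ}
    (hS : ∀ v ∈ barycentricGaps (Module.finrank ℝ E + 2) K f, v ≤ S) {μ : K →₀ ℝ}
    (hμ : Finsupp.linearCombination ℝ (fun x : K ↦ ((1 : ℝ), (x : E))) μ = 0) :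
    Finsupp.linearCombination ℝ (fun x : K ↦ f x) μ ≤ S / 2 * μ.sum fun _ c ↦ |c| := by
  rcases eq_or_ne μ 0 with rfl | hμ₀
  · simp
  obtain ⟨A, B, a, b, hcard, ha, hb, hmass, hab, hle⟩ :=
    exists_card_add_card_le_of_linearCombination_eq_zero (fun x : K ↦ f x) hμ
  simp only [Prod.ext_iff, Prod.fst_sum, Prod.snd_sum, Prod.smul_fst, Prod.smul_snd, smul_eq_mul,
    mul_one] at hab
  obtain ⟨hmass_eq, hbary⟩ := hab
  have hM : 0 < ∑ i ∈ A, a i := by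
    have habs : 0 < μ.sum fun _ c ↦ |c| :=
      sum_pos (fun x hx ↦ abs_pos.2 (Finsupp.mem_support_iff.1 hx))
        (Finsupp.support_nonempty_iff.2 hμ₀)
    linarith
  have hN : #A + #B ≤ Module.finrank ℝ E + 2 := by
    rw [Module.finrank_prod, Module.finrank_self] at hcard
    lia
  have hgap := hS _ <|
    div_mem_barycentricGaps (f := f) (fun x : K ↦ x.2) hN ha hb hM rfl hmass_eq.symm hbary
  rw [div_le_iff₀ hM] at hgap
  rw [← hmass, ← hmass_eq]
  linarith

lemma half_mem_affineErrorBounds_of_barycentricGaps_le {S : ℝ} (hS₀ : 0 ≤ S)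
    (hS : ∀ v ∈ barycentricGaps (Module.finrank ℝ E + 2) K f, v ≤ S) :
    S / 2 ∈ affineErrorBounds K f := by
  obtain ⟨g, hg⟩ := exists_dual_forall_abs_sub_le (div_nonneg hS₀ zero_le_two)
    fun μ hμ ↦ linearCombination_le_of_barycentricGaps_le hS hμ
  refine ⟨g (1, 0), g ∘ₗ LinearMap.inr ℝ ℝ E, fun x hx ↦ ?_⟩
  simpa [← map_add] using hg ⟨x, hx⟩

theorem best_affine_approx_duality_general (hK : K.Nonempty)
    (hf : (affineErrorBounds K f).Nonempty) :
    IsLeast (affineErrorBounds K f)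
      ((1 / 2) * sSup (barycentricGaps (Module.finrank ℝ E + 2) K f)) := by
  have hzero := zero_mem_barycentricGaps (f := f) (Nat.le_add_left 2 (Module.finrank ℝ E)) hK
  have hbdd : BddAbove (barycentricGaps (Module.finrank ℝ E + 2) K f) := by
    obtain ⟨r, hr⟩ := hf
    exact ⟨2 * r, fun v hv ↦ le_two_mul_of_mem_barycentricGaps hv hr⟩
  constructor
  · rw [one_div_mul_eq_div]
    exact half_mem_affineErrorBounds_of_barycentricGaps_le (le_csSup hbdd hzero)
      fun v hv ↦ le_csSup hbdd hv
  · intro r hr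
    have hle := csSup_le ⟨0, hzero⟩ fun v hv ↦ le_two_mul_of_mem_barycentricGaps hv hr
    linarith

end AffineApproximation

/-- Proposition 3.2: a duality formula for the best affine approximation on a compact set. -/
theorem best_affine_approx_duality (n : ℕ) (K : Set (Fin n → ℝ)) (hne : K.Nonempty)
    (hK : IsCompact K) (f : (Fin n → ℝ) → ℝ) (hf : ContinuousOn f K) :
    sInf {r : ℝ | ∃ (c : ℝ) (a : Fin n → ℝ), ∀ x ∈ K, |f x - (c + ∑ i, a i * x i)| ≤ r} =
      (1 / 2) * sSup {v : ℝ | ∃ (l m : ℕ) (x : Fin l → Fin n → ℝ) (y : Fin m → Fin n → ℝ)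
        (a : Fin l → ℝ) (b : Fin m → ℝ),
        1 ≤ l ∧ 1 ≤ m ∧ l + m ≤ n + 2 ∧
        (∀ i, x i ∈ K) ∧ (∀ j, y j ∈ K) ∧ (∀ i, 0 ≤ a i) ∧ (∀ j, 0 ≤ b j) ∧
        (∑ i, a i) = 1 ∧ (∑ j, b j) = 1 ∧ (∑ i, a i • x i) = (∑ j, b j • y j) ∧
        v = (∑ i, a i * f (x i)) - (∑ j, b j * f (y j))} := by
  obtain ⟨C, hC⟩ := hK.exists_bound_of_continuousOn hf
  have h := best_affine_approx_duality_general hne ⟨C, 0, 0, by simpa using hC⟩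
  rw [affineErrorBounds_pi, Module.finrank_fin_fun] at h
  exact h.csInf_eq
end

section
/- Let m ≥ 1 and β ≥ 0. Denote by S^k the simplex co{e₁,…,e_{k+1}} ⊂ ℝ^{k+1}, and for a function f on a convex set K let δ_k(f;K) := sup{|f(∑_{i=1}^k a_i x_i) − ∑_{i=1}^k a_i f(x_i)|} over all x₁,…,x_k ∈ K and a₁,…,a_k ≥ 0 with ∑ a_i = 1. If every continuous f : S^m → ℝ with ω₂(f;S^m) ≤ 1 satisfies δ_{m+1}(f;S^m) ≤ β, then every continuous f : S^{2m} → ℝ with ω₂(f;S^{2m}) ≤ 1 satisfies δ_{2m+1}(f;S^{2m}) ≤ β + 1/2. (Lemma 3.4: β_{2m} ≤ β_m + 1/2.) -/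
open Finset

/-- `deltaBound k K f β` says `δ_k(f;K) ≤ β`: for all convex combinations of `k` points of `K`,
`|f(∑ aᵢ xᵢ) − ∑ aᵢ f(xᵢ)| ≤ β`. -/
def deltaBound {E : Type*} [AddCommGroup E] [Module ℝ E] (k : ℕ) (K : Set E) (f : E → ℝ)
    (β : ℝ) : Prop :=
  ∀ (x : Fin k → E) (a : Fin k → ℝ), (∀ i, x i ∈ K) → (∀ i, 0 ≤ a i) → (∑ i, a i) = 1 →
    |f (∑ i, a i • x i) - ∑ i, a i * f (x i)| ≤ β

/-!
Given `2m + 1` weights with sum `1`, single out a largest one and group the others into `m` pairs.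
Choosing which member of each pair goes left and which goes right, the imbalance of the two sides
can be kept below the largest weight, so neither side weighs more than `1/2`. Doubling the weights
of one side and giving the rest to the singled-out point produces a convex combination of `m + 1`
points, controlled by `δ_{m+1}`; the original combination is the midpoint of the two points obtained
in this way, and the second difference there costs `1/2`.
-/

section Balancing

theorem exists_perm_abs_sum_sub_le {ι : Type*} (s : Finset ι) {a : ι × Bool → ℝ} {M : ℝ}
    (hM : 0 ≤ M) (ha : ∀ i ∈ s, |a (i, true) - a (i, false)| ≤ M) :
    ∃ τ : ι → Equiv.Perm Bool, |∑ i ∈ s, (a (i, τ i true) - a (i, τ i false))| ≤ M := by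
  classical
  induction s using Finset.induction_on with
  | empty => exact ⟨fun _ => 1, by simpa using hM⟩
  | insert j s hj ih =>
    obtain ⟨τ, hτ⟩ := ih fun i hi => ha i (mem_insert_of_mem hi)
    set S := ∑ i ∈ s, (a (i, τ i true) - a (i, τ i false)) with hS
    have sum_update (π : Equiv.Perm Bool) :
        ∑ i ∈ insert j s, (a (i, Function.update τ j π i true) -
          a (i, Function.update τ j π i false)) = a (j, π true) - a (j, π false) + S := by
      rw [sum_insert hj, Function.update_self, hS]
      congr 1
      refine sum_congr rfl fun i hi => ?_
      rw [Function.update_of_ne (ne_of_mem_of_not_mem hi hj)]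
    -- The new difference is given the sign opposite to `S`.
    have exists_sign : ∃ π : Equiv.Perm Bool, |a (j, π true) - a (j, π false) + S| ≤ M := by
      have hd := abs_le.mp (ha j (mem_insert_self j s))
      have hS_bounds := abs_le.mp hτ
      rcases le_total 0 ((a (j, true) - a (j, false)) * S) with h | h
      · refine ⟨Equiv.swap true false, ?_⟩
        rw [Equiv.swap_apply_left, Equiv.swap_apply_right, abs_le]
        rcases mul_nonneg_iff.mp h with h | h <;> constructor <;> linarith
      · refine ⟨1, ?_⟩
        rw [Equiv.Perm.one_apply, Equiv.Perm.one_apply, abs_le]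
        rcases mul_nonpos_iff.mp h with h | h <;> constructor <;> linarith
    obtain ⟨π, hπ⟩ := exists_sign
    exact ⟨Function.update τ j π, by rwa [sum_update]⟩

theorem exists_equiv_option_forall_le {ι : Type*} [Fintype ι] {m : ℕ}
    (hι : Fintype.card ι = 2 * m + 1) (a : ι → ℝ) :
    ∃ e : Option (Fin m × Bool) ≃ ι, ∀ j, a j ≤ a (e none) := by
  classical
  have : Nonempty ι := Fintype.card_pos_iff.mp (by omega)
  obtain ⟨k, hk⟩ := Finite.exists_max a
  have hcard : Fintype.card (Fin m × Bool) = Fintype.card {j // j ≠ k} := by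
    simp [hι, mul_comm]
  refine ⟨(Fintype.equivOfCardEq hcard).optionCongr.trans (Equiv.optionSubtypeNe k), ?_⟩
  simpa using hk

theorem exists_equiv_option_sum_le_half {ι : Type*} [Fintype ι] {m : ℕ}
    (hι : Fintype.card ι = 2 * m + 1) {a : ι → ℝ} (ha : ∀ j, 0 ≤ a j) :
    ∃ e : Option (Fin m × Bool) ≃ ι, ∀ b, ∑ i, a (e (some (i, b))) ≤ (∑ j, a j) / 2 := by
  obtain ⟨e, he⟩ := exists_equiv_option_forall_le hι a
  obtain ⟨τ, hτ⟩ := exists_perm_abs_sum_sub_le univ (a := fun p => a (e (some p))) (ha (e none))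
    fun i _ => abs_sub_le_of_nonneg_of_le (ha _) (he _) (ha _) (he _)
  let e' := ((Equiv.refl (Fin m)).prodShear τ).optionCongr.trans e
  refine ⟨e', ?_⟩
  have total : ∑ j, a j = a (e none) +
      (∑ i, a (e (some (i, τ i true))) + ∑ i, a (e (some (i, τ i false)))) := by
    rw [← e'.sum_comp, Fintype.sum_option, Fintype.sum_prod_type_right, Fintype.sum_bool]
    rfl
  rw [sum_sub_distrib, abs_le] at hτ
  rintro (_ | _)
  · change ∑ i, a (e (some (i, τ i false))) ≤ _
    linarith
  · change ∑ i, a (e (some (i, τ i true))) ≤ _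
    linarith

end Balancing

section ConvexCombinations

variable {E : Type*} [AddCommGroup E] [Module ℝ E] {K : Set E} {f : E → ℝ} {β c : ℝ}

theorem diffBound.abs_add_sub_two_mul_midpoint_le (hd : diffBound 2 K f c) (hK : Convex ℝ K)
    {p q : E} (hp : p ∈ K) (hq : q ∈ K) : |f p + f q - 2 * f (midpoint ℝ p q)| ≤ c := by
  have h_mid : p + (1 / 2 : ℝ) • (q - p) = midpoint ℝ p q := by
    rw [midpoint_eq_smul_add, invOf_eq_inv]
    module
  have h_end : p + (2 : ℝ) • (1 / 2 : ℝ) • (q - p) = q := by module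
  have h := hd p ((1 / 2 : ℝ) • (q - p)) fun j hj => by
    interval_cases j
    · simpa using hp
    · simpa [← h_mid] using hK.midpoint_mem hp hq
    · simpa [h_end] using hq
  have h_diff : f p + f q - 2 * f (midpoint ℝ p q) =
      (-1) ^ (2 - 0) * (Nat.choose 2 0 : ℝ) * f p +
        (-1) ^ (2 - 1) * (Nat.choose 2 1 : ℝ) * f (midpoint ℝ p q) +
        (-1) ^ (2 - 2) * (Nat.choose 2 2 : ℝ) * f q := by
    norm_num
    ring
  rw [h_diff]
  simpa only [sum_range_succ, sum_range_zero, Nat.cast_zero, Nat.cast_one, Nat.cast_ofNat,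
    zero_smul, one_smul, add_zero, zero_add, h_mid, h_end] using h

theorem diffBound.comp_linearMap {F : Type*} [AddCommGroup F] [Module ℝ F] {n : ℕ} {s : Set F}
    (hd : diffBound n K f c) (L : F →ₗ[ℝ] E) (hL : Set.MapsTo L s K) :
    diffBound n s (f ∘ L) c := by
  intro x h hx
  simpa only [Function.comp_apply, map_add, map_smul] using
    hd (L x) (L h) fun j hj => by simpa only [map_add, map_smul] using hL (hx j hj)

theorem deltaBound.abs_sub_le_of_card_eq {ι : Type*} [Fintype ι] {k : ℕ}
    (hD : deltaBound k K f β) (hι : Fintype.card ι = k) {x : ι → E} {a : ι → ℝ}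
    (hx : ∀ i, x i ∈ K) (ha : ∀ i, 0 ≤ a i) (hsum : ∑ i, a i = 1) :
    |f (∑ i, a i • x i) - ∑ i, a i * f (x i)| ≤ β := by
  let e := (Fintype.equivFinOfCardEq hι).symm
  rw [← e.sum_comp] at hsum
  rw [← e.sum_comp, ← e.sum_comp fun i => a i * f (x i)]
  exact hD (x ∘ e) (a ∘ e) (fun _ => hx _) (fun _ => ha _) hsum

theorem deltaBound_of_stdSimplex [TopologicalSpace E] [ContinuousAdd E] [ContinuousSMul ℝ E]
    {k n : ℕ}
    (H : ∀ g : (Fin k → ℝ) → ℝ, ContinuousOn g (stdSimplex ℝ (Fin k)) →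
      diffBound n (stdSimplex ℝ (Fin k)) g c → deltaBound k (stdSimplex ℝ (Fin k)) g β)
    (hK : Convex ℝ K) (hf : ContinuousOn f K) (hd : diffBound n K f c) :
    deltaBound k K f β := by
  intro x a hx ha hsum
  let L : (Fin k → ℝ) →ₗ[ℝ] E := Fintype.linearCombination ℝ x
  have hL : Set.MapsTo L (stdSimplex ℝ (Fin k)) K := fun s hs =>
    hK.sum_mem (fun i _ => hs.1 i) hs.2 fun i _ => hx i
  have h := H (f ∘ L) (hf.comp L.continuous_on_pi.continuousOn hL) (hd.comp_linearMap L hL)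
    (fun i => Pi.single i 1) a (fun i => single_mem_stdSimplex ℝ i) ha hsum
  have h_vertices : ∑ i, a i • (Pi.single i 1 : Fin k → ℝ) = a := (pi_eq_sum_univ' a).symm
  simpa [h_vertices, L, Fintype.linearCombination_apply] using h

end ConvexCombinations

section Doubling

/-- The convex weights obtained from weights `a` on a distinguished point and `ι` pairs of points by
doubling the weights of the `b`-th members of the pairs, dropping the other members, and giving the
remaining mass to the distinguished point `none`. -/
def sideWeight {ι : Type*} [Fintype ι] (a : Option (ι × Bool) → ℝ) (b : Bool) (j : Option ι) : ℝ :=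
  j.elim (1 - 2 * ∑ i, a (some (i, b))) fun i => 2 * a (some (i, b))

variable {ι : Type*} [Fintype ι] {a : Option (ι × Bool) → ℝ}

theorem sideWeight_nonneg (ha : ∀ j, 0 ≤ a j) {b : Bool} (hb : ∑ i, a (some (i, b)) ≤ 1 / 2) :
    ∀ j, 0 ≤ sideWeight a b j :=
  Option.forall.mpr ⟨by simp only [sideWeight, Option.elim_none]; linarith,
    fun _ => mul_nonneg zero_le_two (ha _)⟩

theorem sum_sideWeight (a : Option (ι × Bool) → ℝ) (b : Bool) : ∑ j, sideWeight a b j = 1 := by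
  simp [Fintype.sum_option, sideWeight, mul_sum]

theorem midpoint_sum_sideWeight_smul {V : Type*} [AddCommGroup V] [Module ℝ V]
    (hsum : ∑ j, a j = 1) (g : Option (ι × Bool) → V) :
    midpoint ℝ (∑ j, sideWeight a true j • g (j.map (·, true)))
      (∑ j, sideWeight a false j • g (j.map (·, false))) = ∑ j, a j • g j := by
  simp only [Fintype.sum_option, Fintype.sum_prod_type_right, Fintype.sum_bool] at hsum ⊢
  have h_none : a none = 1 - (∑ i, a (some (i, true)) + ∑ i, a (some (i, false))) :=
    eq_sub_of_add_eq hsum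
  simp only [sideWeight, Option.elim_none, Option.elim_some, Option.map_none, Option.map_some,
    mul_smul, ← smul_sum, h_none, midpoint_eq_smul_add, invOf_eq_inv]
  module

variable {E : Type*} [AddCommGroup E] [Module ℝ E] {K : Set E} {f : E → ℝ} {β c : ℝ}

theorem abs_sub_le_of_sum_le_half (hK : Convex ℝ K) (hd : diffBound 2 K f c)
    (hD : deltaBound (Fintype.card ι + 1) K f β) {x : Option (ι × Bool) → E} (hx : ∀ j, x j ∈ K)
    (ha : ∀ j, 0 ≤ a j) (hsum : ∑ j, a j = 1) (hhalf : ∀ b, ∑ i, a (some (i, b)) ≤ 1 / 2) :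
    |f (∑ j, a j • x j) - ∑ j, a j * f (x j)| ≤ β + c / 2 := by
  let P (b : Bool) : E := ∑ j, sideWeight a b j • x (j.map (·, b))
  let A (b : Bool) : ℝ := ∑ j, sideWeight a b j * f (x (j.map (·, b)))
  have hP (b : Bool) : P b ∈ K :=
    hK.sum_mem (fun j _ => sideWeight_nonneg ha (hhalf b) j) (sum_sideWeight a b) fun _ _ => hx _
  have hPA (b : Bool) : |f (P b) - A b| ≤ β :=
    hD.abs_sub_le_of_card_eq Fintype.card_option (fun _ => hx _)
      (sideWeight_nonneg ha (hhalf b)) (sum_sideWeight a b)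
  have h_point : midpoint ℝ (P true) (P false) = ∑ j, a j • x j :=
    midpoint_sum_sideWeight_smul hsum x
  have h_value : midpoint ℝ (A true) (A false) = ∑ j, a j * f (x j) :=
    midpoint_sum_sideWeight_smul hsum (f ∘ x)
  have h_diff := abs_le.mp (hd.abs_add_sub_two_mul_midpoint_le hK (hP true) (hP false))
  have h_true := abs_le.mp (hPA true)
  have h_false := abs_le.mp (hPA false)
  rw [← h_point, ← h_value, midpoint_eq_smul_add ℝ (A true), invOf_eq_inv, smul_eq_mul, abs_le]
  constructor <;> linarith

theorem deltaBound.doubling {m : ℕ} (hD : deltaBound (m + 1) K f β) (hK : Convex ℝ K)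
    (hd : diffBound 2 K f c) : deltaBound (2 * m + 1) K f (β + c / 2) := by
  intro x a hx ha hsum
  obtain ⟨e, he⟩ := exists_equiv_option_sum_le_half (Fintype.card_fin _) ha
  rw [hsum] at he
  rw [← e.sum_comp] at hsum
  rw [← e.sum_comp, ← e.sum_comp fun i => a i * f (x i)]
  exact abs_sub_le_of_sum_le_half (x := x ∘ e) (a := a ∘ e) hK hd (by simpa using hD)
    (fun _ => hx _) (fun _ => ha _) hsum he

end Doubling

theorem simplex_delta_doubling_general {E : Type*} [AddCommGroup E] [Module ℝ E]
    [TopologicalSpace E] [ContinuousAdd E] [ContinuousSMul ℝ E] {K : Set E} (hK : Convex ℝ K)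
    {m : ℕ} {β c : ℝ}
    (H : ∀ g : (Fin (m + 1) → ℝ) → ℝ, ContinuousOn g (stdSimplex ℝ (Fin (m + 1))) →
      diffBound 2 (stdSimplex ℝ (Fin (m + 1))) g c →
      deltaBound (m + 1) (stdSimplex ℝ (Fin (m + 1))) g β)
    {f : E → ℝ} (hf : ContinuousOn f K) (hd : diffBound 2 K f c) :
    deltaBound (2 * m + 1) K f (β + c / 2) :=
  (deltaBound_of_stdSimplex H hK hf hd).doubling hK hd

/-- Lemma 3.4: `β_{2m} ≤ β_m + 1/2`. -/
theorem simplex_delta_doubling (m : ℕ) (hm : 1 ≤ m) (β : ℝ) (hβ : 0 ≤ β)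
    (H : ∀ f : (Fin (m + 1) → ℝ) → ℝ, ContinuousOn f (stdSimplex ℝ (Fin (m + 1))) →
      diffBound 2 (stdSimplex ℝ (Fin (m + 1))) f 1 →
      deltaBound (m + 1) (stdSimplex ℝ (Fin (m + 1))) f β) :
    ∀ f : (Fin (2 * m + 1) → ℝ) → ℝ, ContinuousOn f (stdSimplex ℝ (Fin (2 * m + 1))) →
      diffBound 2 (stdSimplex ℝ (Fin (2 * m + 1))) f 1 →
      deltaBound (2 * m + 1) (stdSimplex ℝ (Fin (2 * m + 1))) f (β + 1 / 2) :=
  fun _ hf hd => simplex_delta_doubling_general (convex_stdSimplex ℝ _) H hf hd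
end
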